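/- arXiv:1902.08770 — 3 statements merged into one kernel-verified Lean document; each statement's English description precedes it below -/
import Mathlib

section
/- For every C₀ ≥ 1 there are constants c ≥ 1 and C > 0 with the following property (far-field asymptote of the doubly periodic Newtonian potential). Let a be a positive definite Hermitian 2×2 complex matrix with A = det a ≥ 1 which is C₀-elliptic, and define γ(η₁, η₂, μ) = −(1/(8π²)) Σ_{(n₁,n₂)∈ℤ²} ( Q(η₁+n₁, η₂+n₂) + Aμ² )^{−3/2} for (η₁, η₂, μ) ∈ ℂ² × ℝ with ϱ > 0, where ϱ = √((A/𝔸)Qℝ(Im η₁, Im η₂) + Aμ²). Then whenever ϱ ≥ c·A^{1/4}, the series converges absolutely and | γ(η₁, η₂, μ) + 1/(4π·ϱ·√𝔸) | ≤ C·ϱ^{−3}. -/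
/-- The Hermitian form `Q(w) = a₁₁|w₁|² + a₂₂|w₂|² + 2Re(a₁₂ w₁ conj(w₂))`. -/
noncomputable def Qh (a11 a22 : ℝ) (a12 w1 w2 : ℂ) : ℝ :=
  a11 * Complex.normSq w1 + a22 * Complex.normSq w2 + 2 * (a12 * w1 * (starRingEnd ℂ) w2).re

/-- The real quadratic form `Qℝ(y) = a₁₁y₁² + 2Re(a₁₂)y₁y₂ + a₂₂y₂²`. -/
noncomputable def QR (a11 a22 : ℝ) (a12 : ℂ) (y1 y2 : ℝ) : ℝ :=
  a11 * y1 ^ 2 + 2 * a12.re * y1 * y2 + a22 * y2 ^ 2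

/-- The distance `ϱ = √((A/𝔸)Qℝ(y₁,y₂) + Aμ²)` with `A = det a`, `𝔸 = A + (Im a₁₂)²`. -/
noncomputable def rhoH (a11 a22 : ℝ) (a12 : ℂ) (y1 y2 μ : ℝ) : ℝ :=
  Real.sqrt (((a11 * a22 - Complex.normSq a12) /
      (a11 * a22 - Complex.normSq a12 + a12.im ^ 2)) * QR a11 a22 a12 y1 y2
    + (a11 * a22 - Complex.normSq a12) * μ ^ 2)

/-- `C₀`-ellipticity of the Hermitian matrix `a`. -/
def IsEllipticH (C₀ a11 a22 : ℝ) (a12 : ℂ) : Prop :=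
  ∀ w1 w2 : ℂ,
    C₀⁻¹ * Real.sqrt (a11 * a22 - Complex.normSq a12) *
        (Complex.normSq w1 + Complex.normSq w2) ≤ Qh a11 a22 a12 w1 w2 ∧
      Qh a11 a22 a12 w1 w2 ≤ C₀ * Real.sqrt (a11 * a22 - Complex.normSq a12) *
        (Complex.normSq w1 + Complex.normSq w2)

/-!
Completing the square in the real parts turns `Q(η + n) + Aμ²` into `Qℝ(v + n) + ϱ²` with `v` real,
so the series samples the radial function `(‖x‖² + ϱ²) ^ (-3/2)` on a translate of a planar lattice
of covolume `√𝔸`. On a cell whose barycentre is the sample point the linear Taylor term integrates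
to zero. Hence covolume times sum differs from the integral `2π/ϱ` only through the quadratic
remainder, which is a multiple of `√A (‖x‖² + ϱ²) ^ (-5/2)` as soon as the cells are not large
compared with `ϱ`, and the integral of this majorant is of order `√A/ϱ³`.
-/

open MeasureTheory Set Module
open scoped Pointwise RealInnerProductSpace Real

section MidpointRule

theorem hasSum_setIntegral_vadd {G α : Type*} [AddGroup G] [Countable G] [AddAction G α]
    [MeasurableSpace α] [MeasurableConstVAdd G α] {μ : Measure α} [VAddInvariantMeasure G α μ]
    {F : Set α} (hF : IsAddFundamentalDomain G F μ) {V : Type*} [NormedAddCommGroup V]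
    [NormedSpace ℝ V] {f : α → V} (hf : Integrable f μ) :
    HasSum (fun g : G => ∫ x in F, f (g +ᵥ x) ∂μ) (∫ x, f x ∂μ) := by
  have htiles : HasSum (fun g : G => ∫ x in g +ᵥ F, f x ∂μ) (∫ x, f x ∂μ) := by
    have hsum := hasSum_integral_measure (hF.sum_restrict.symm ▸ hf)
    rwa [hF.sum_restrict] at hsum
  convert htiles using 2 with g
  exact ((measurePreserving_vadd g μ).setIntegral_image_emb
    (measurableEmbedding_const_vadd g) f F).symm

variable {E : Type*} [NormedAddCommGroup E] [NormedSpace ℝ E] [CompleteSpace E] [MeasurableSpace E]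
  {μ : Measure E}

theorem integral_map_sub_average [IsFiniteMeasure μ] (hid : Integrable id μ) (ℓ : E →L[ℝ] ℝ) :
    ∫ u, ℓ (u - ⨍ w, w ∂μ) ∂μ = 0 := by
  rw [ContinuousLinearMap.integral_comp_comm ℓ (φ := fun u => u - ⨍ w, w ∂μ)
    (hid.sub (integrable_const _)), integral_sub_average, map_zero]

theorem abs_measureReal_univ_mul_sub_integral_le [IsFiniteMeasure μ] (hid : Integrable id μ)
    {f g : E → ℝ} (hf : Integrable f μ) (hg : Integrable g μ) {y : ℝ} (ℓ : E →L[ℝ] ℝ)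
    (hℓ : ∀ᵐ u ∂μ, |f u - y - ℓ (u - ⨍ w, w ∂μ)| ≤ g u) :
    |μ.real univ * y - ∫ u, f u ∂μ| ≤ ∫ u, g u ∂μ := by
  have hℓ_int : Integrable (fun u => ℓ (u - ⨍ w, w ∂μ)) μ :=
    ℓ.integrable_comp (hid.sub (integrable_const _))
  have hfy : Integrable (fun u => f u - y) μ := hf.sub (integrable_const _)
  have hremainder : ∫ u, (f u - y - ℓ (u - ⨍ w, w ∂μ)) ∂μ =
      (∫ u, f u ∂μ) - μ.real univ * y := by
    rw [integral_sub hfy hℓ_int, integral_sub hf (integrable_const _),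
      integral_map_sub_average hid, integral_const, smul_eq_mul, sub_zero]
  rw [abs_sub_comm, ← hremainder]
  exact norm_integral_le_of_norm_le (f := fun u => f u - y - ℓ (u - ⨍ w, w ∂μ)) hg hℓ

theorem summable_and_abs_measureReal_mul_tsum_sub_integral_le [BorelSpace E]
    [μ.IsAddLeftInvariant] {Λ : AddSubgroup E} [Countable Λ] {F : Set E}
    (hF : IsAddFundamentalDomain Λ F μ) (hF_zero : μ F ≠ 0) (hF_top : μ F ≠ ⊤)
    (hid : IntegrableOn id F μ) {f g : E → ℝ} (hf : Integrable f μ) (hg : Integrable g μ)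
    (hfg : ∀ x, ∃ ℓ : E →L[ℝ] ℝ, ∀ u ∈ F,
      |f (x + u) - f (x + ⨍ w in F, w ∂μ) - ℓ (u - ⨍ w in F, w ∂μ)| ≤ g (x + u)) :
    Summable (fun l : Λ => f (l + ⨍ w in F, w ∂μ)) ∧
      |μ.real F * ∑' l : Λ, f (l + ⨍ w in F, w ∂μ) - ∫ x, f x ∂μ| ≤ ∫ x, g x ∂μ := by
  have : IsFiniteMeasure (μ.restrict F) := ⟨by simpa using hF_top.lt_top⟩
  set c := ⨍ w in F, w ∂μ
  have hf_sum : HasSum (fun l : Λ => ∫ u in F, f (l + u) ∂μ) (∫ x, f x ∂μ) :=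
    hasSum_setIntegral_vadd hF hf
  have hg_sum : HasSum (fun l : Λ => ∫ u in F, g (l + u) ∂μ) (∫ x, g x ∂μ) :=
    hasSum_setIntegral_vadd hF hg
  have hcell (l : Λ) :
      ‖μ.real F * f (l + c) - ∫ u in F, f (l + u) ∂μ‖ ≤ ∫ u in F, g (l + u) ∂μ := by
    obtain ⟨ℓ, hℓ⟩ := hfg l
    simpa using abs_measureReal_univ_mul_sub_integral_le hid
      (hf.comp_add_left (l : E)).restrict (hg.comp_add_left (l : E)).restrict ℓ
      ((ae_restrict_mem₀ hF.nullMeasurableSet).mono hℓ)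
  have hsum : Summable fun l : Λ => f (l + c) := by
    have hmul := (Summable.of_norm_bounded hg_sum.summable hcell).add hf_sum.summable
    simpa [summable_mul_left_iff, measureReal_def, ENNReal.toReal_eq_zero_iff, hF_zero, hF_top]
      using hmul
  refine ⟨hsum, ?_⟩
  rw [← tsum_mul_left, ← hf_sum.tsum_eq, ← (hsum.mul_left _).tsum_sub hf_sum.summable]
  exact tsum_of_norm_bounded hg_sum hcell

end MidpointRule

section Taylor

theorem norm_sub_sub_deriv_le_of_norm_deriv_deriv_le {V : Type*} [NormedAddCommGroup V]
    [NormedSpace ℝ V] {φ φ' φ'' : ℝ → V} {M : ℝ}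
    (hφ : ∀ t ∈ Icc (0 : ℝ) 1, HasDerivAt φ (φ' t) t)
    (hφ' : ∀ t ∈ Icc (0 : ℝ) 1, HasDerivAt φ' (φ'' t) t)
    (hM : ∀ t ∈ Icc (0 : ℝ) 1, ‖φ'' t‖ ≤ M) :
    ‖φ 1 - φ 0 - φ' 0‖ ≤ M := by
  have hM₀ : 0 ≤ M := (norm_nonneg _).trans (hM 0 (by simp))
  have hφ'_sub (t : ℝ) (ht : t ∈ Icc (0 : ℝ) 1) : ‖φ' t - φ' 0‖ ≤ M :=
    calc ‖φ' t - φ' 0‖ ≤ M * (t - 0) :=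
          norm_image_sub_le_of_norm_deriv_le_segment' (fun s hs => (hφ' s hs).hasDerivWithinAt)
            (fun s hs => hM s (Ico_subset_Icc_self hs)) t ht
      _ ≤ M := mul_le_of_le_one_right hM₀ (by linarith [ht.2])
  have hderiv (t : ℝ) (ht : t ∈ Icc (0 : ℝ) 1) :
      HasDerivWithinAt (fun s => φ s - s • φ' 0) (φ' t - φ' 0) (Icc 0 1) t := by
    simpa using ((hφ t ht).fun_sub ((hasDerivAt_id t).smul_const (φ' 0))).hasDerivWithinAt
  simpa [sub_right_comm] using norm_image_sub_le_of_norm_deriv_le_segment_01' hderiv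
    fun t ht => hφ'_sub t (Ico_subset_Icc_self ht)

variable {H : Type*} [NormedAddCommGroup H] [InnerProductSpace ℝ H] {σ κ p : ℝ} {x u : H}

theorem hasDerivAt_norm_add_smul_sq_add_rpow (hσ : 0 < σ) (p : ℝ) (x u : H) (t : ℝ) :
    HasDerivAt (fun t : ℝ => (‖x + t • u‖ ^ 2 + σ) ^ p)
      (2 * p * ⟪x + t • u, u⟫ * (‖x + t • u‖ ^ 2 + σ) ^ (p - 1)) t := by
  have hline : HasDerivAt (fun t : ℝ => x + t • u) u t := by
    simpa using ((hasDerivAt_id t).smul_const u).const_add x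
  refine ((hline.norm_sq.add_const σ).rpow_const (Or.inl (by positivity))).congr_deriv ?_
  ring

theorem hasDerivAt_inner_mul_norm_add_smul_sq_add_rpow (hσ : 0 < σ) (p : ℝ) (x u : H) (t : ℝ) :
    HasDerivAt (fun t : ℝ => ⟪x + t • u, u⟫ * (‖x + t • u‖ ^ 2 + σ) ^ p)
      (‖u‖ ^ 2 * (‖x + t • u‖ ^ 2 + σ) ^ p +
        2 * p * ⟪x + t • u, u⟫ ^ 2 * (‖x + t • u‖ ^ 2 + σ) ^ (p - 1)) t := by
  have hline : HasDerivAt (fun t : ℝ => x + t • u) u t := by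
    simpa using ((hasDerivAt_id t).smul_const u).const_add x
  refine ((hline.inner ℝ (hasDerivAt_const t u)).fun_mul
    (hasDerivAt_norm_add_smul_sq_add_rpow hσ p x u t)).congr_deriv ?_
  rw [inner_zero_right, zero_add, real_inner_self_eq_norm_sq]
  ring

theorem inner_sq_mul_norm_sq_add_rpow_le (hσ : 0 < σ) (p : ℝ) (x u : H) :
    ⟪x, u⟫ ^ 2 * (‖x‖ ^ 2 + σ) ^ (p - 1) ≤ ‖u‖ ^ 2 * (‖x‖ ^ 2 + σ) ^ p :=
  calc ⟪x, u⟫ ^ 2 * (‖x‖ ^ 2 + σ) ^ (p - 1)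
      ≤ (‖u‖ ^ 2 * (‖x‖ ^ 2 + σ)) * (‖x‖ ^ 2 + σ) ^ (p - 1) := by
        gcongr
        calc ⟪x, u⟫ ^ 2 = |⟪x, u⟫| ^ 2 := (sq_abs _).symm
          _ ≤ (‖x‖ * ‖u‖) ^ 2 := by gcongr; exact abs_real_inner_le_norm x u
          _ = ‖u‖ ^ 2 * (‖x‖ ^ 2 + 0) := by ring
          _ ≤ ‖u‖ ^ 2 * (‖x‖ ^ 2 + σ) := by gcongr
    _ = ‖u‖ ^ 2 * (‖x‖ ^ 2 + σ) ^ p := by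
        rw [mul_assoc, mul_comm (_ + _), Real.rpow_sub_one (by positivity),
          div_mul_cancel₀ _ (by positivity)]

theorem norm_add_sq_add_le_mul (hσ : 0 < σ) (hκ : 2 * ‖u‖ ^ 2 ≤ κ * σ) :
    ‖x + u‖ ^ 2 + σ ≤ (2 + κ) * (‖x‖ ^ 2 + σ) := by
  have hκ₀ : 0 ≤ κ := nonneg_of_mul_nonneg_left ((by positivity : 0 ≤ 2 * ‖u‖ ^ 2).trans hκ) hσ
  have hadd : ‖x + u‖ ^ 2 ≤ 2 * (‖x‖ ^ 2 + ‖u‖ ^ 2) := by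
    nlinarith [parallelogram_law_with_norm ℝ x u, sq_nonneg ‖x - u‖]
  nlinarith [mul_nonneg hκ₀ (sq_nonneg ‖x‖)]

theorem norm_add_smul_sq_add_rpow_neg_le (hσ : 0 < σ) (hκ : 2 * ‖u‖ ^ 2 ≤ κ * σ) (hp : 0 ≤ p)
    {t : ℝ} (ht : t ∈ Icc (0 : ℝ) 1) :
    (‖x + t • u‖ ^ 2 + σ) ^ (-p) ≤ (2 + κ) ^ p * (‖x + u‖ ^ 2 + σ) ^ (-p) := by
  have hκ₀ : 0 ≤ κ := nonneg_of_mul_nonneg_left ((by positivity : 0 ≤ 2 * ‖u‖ ^ 2).trans hκ) hσ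
  have hrest : 2 * ‖(1 - t) • u‖ ^ 2 ≤ κ * σ := by
    refine le_trans ?_ hκ
    gcongr
    rw [norm_smul, Real.norm_of_nonneg (by linarith [ht.2])]
    exact mul_le_of_le_one_left (norm_nonneg u) (by linarith [ht.1])
  have hcomp : ‖x + u‖ ^ 2 + σ ≤ (2 + κ) * (‖x + t • u‖ ^ 2 + σ) := by
    convert norm_add_sq_add_le_mul (x := x + t • u) hσ hrest using 4
    module
  rw [Real.rpow_neg (by positivity), Real.rpow_neg (by positivity), ← div_eq_mul_inv,
    inv_le_iff_one_le_mul₀ (by positivity), ← mul_div_right_comm, le_div_iff₀ (by positivity),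
    one_mul, ← Real.mul_rpow (by positivity) (by positivity)]
  exact Real.rpow_le_rpow (by positivity) hcomp hp

theorem abs_norm_add_sq_add_rpow_neg_sub_sub_le (hσ : 0 < σ) (hp : 0 < p)
    (hκ : 2 * ‖u‖ ^ 2 ≤ κ * σ) :
    |(‖x + u‖ ^ 2 + σ) ^ (-p) - (‖x‖ ^ 2 + σ) ^ (-p) -
        -(2 * p) * (‖x‖ ^ 2 + σ) ^ (-p - 1) * ⟪x, u⟫| ≤
      4 * p * (p + 1) * (2 + κ) ^ (p + 1) * ‖u‖ ^ 2 * (‖x + u‖ ^ 2 + σ) ^ (-(p + 1)) := by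
  have htaylor := norm_sub_sub_deriv_le_of_norm_deriv_deriv_le
    (φ := fun t : ℝ => (‖x + t • u‖ ^ 2 + σ) ^ (-p))
    (φ' := fun t => -(2 * p) * (⟪x + t • u, u⟫ * (‖x + t • u‖ ^ 2 + σ) ^ (-p - 1)))
    (M := 4 * p * (p + 1) * (2 + κ) ^ (p + 1) * ‖u‖ ^ 2 * (‖x + u‖ ^ 2 + σ) ^ (-(p + 1)))
    (fun t _ => (hasDerivAt_norm_add_smul_sq_add_rpow hσ (-p) x u t).congr_deriv (by ring))
    (fun t _ => (hasDerivAt_inner_mul_norm_add_smul_sq_add_rpow hσ (-p - 1) x u t).const_mul _)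
    fun t ht => ?_
  · simpa [mul_assoc, mul_comm ⟪x, u⟫] using htaylor
  · set y := x + t • u
    have hcs := inner_sq_mul_norm_sq_add_rpow_le hσ (-p - 1) y u
    calc _ = |4 * p * (p + 1) * (⟪y, u⟫ ^ 2 * (‖y‖ ^ 2 + σ) ^ (-p - 1 - 1)) -
            2 * p * (‖u‖ ^ 2 * (‖y‖ ^ 2 + σ) ^ (-p - 1))| := by
          rw [Real.norm_eq_abs]
          ring_nf
      _ ≤ 4 * p * (p + 1) * (‖u‖ ^ 2 * (‖y‖ ^ 2 + σ) ^ (-p - 1)) :=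
          abs_sub_le_of_nonneg_of_le (by positivity) (by gcongr) (by positivity)
            (by gcongr ?_ * _; nlinarith)
      _ ≤ 4 * p * (p + 1) * (‖u‖ ^ 2 * ((2 + κ) ^ (p + 1) * (‖x + u‖ ^ 2 + σ) ^ (-(p + 1)))) := by
          gcongr
          rw [← neg_add']
          exact norm_add_smul_sq_add_rpow_neg_le hσ hκ (by positivity) ht
      _ = _ := by ring

end Taylor

section Integral

theorem integrable_norm_sq_add_rpow_neg {E : Type*} [NormedAddCommGroup E] [NormedSpace ℝ E]
    [FiniteDimensional ℝ E] [MeasurableSpace E] [BorelSpace E] {μ : Measure E} [μ.IsAddHaarMeasure]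
    {σ p : ℝ} (hσ : 0 < σ) (hp : finrank ℝ E < 2 * p) :
    Integrable (fun x : E => (‖x‖ ^ 2 + σ) ^ (-p)) μ := by
  have hunit : Integrable (fun x : E => (1 + ‖x‖ ^ 2) ^ (-p)) μ := by
    convert integrable_rpow_neg_one_add_norm_sq (μ := μ) hp using 4
    ring
  have hsqrt : √σ ≠ 0 := (Real.sqrt_pos.2 hσ).ne'
  convert (hunit.comp_smul (inv_ne_zero hsqrt)).const_mul (σ ^ (-p)) using 2 with x
  rw [← Real.mul_rpow hσ.le (by positivity), norm_smul, mul_pow, Real.norm_eq_abs, sq_abs, inv_pow,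
    Real.sq_sqrt hσ.le, mul_add, mul_one, mul_inv_cancel_left₀ hσ.ne', add_comm]

theorem integral_Ioi_mul_sq_add_rpow_neg {σ p : ℝ} (hσ : 0 < σ) (hp : 1 < p) :
    ∫ r in Ioi (0 : ℝ), r * (r ^ 2 + σ) ^ (-p) = σ ^ (1 - p) / (2 * (p - 1)) := by
  have hp₁ : 1 - p ≠ 0 := by linarith
  have hderiv (r : ℝ) : HasDerivAt (fun r => (r ^ 2 + σ) ^ (1 - p) / (2 * (1 - p)))
      (r * (r ^ 2 + σ) ^ (-p)) r := by
    refine ((((hasDerivAt_pow 2 r).add_const σ).rpow_const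
      (Or.inl (by positivity))).div_const _).congr_deriv ?_
    rw [sub_sub_cancel_left, Nat.cast_two, pow_one]
    field_simp
  have hlim : Filter.Tendsto (fun r : ℝ => (r ^ 2 + σ) ^ (1 - p) / (2 * (1 - p))) Filter.atTop
      (nhds 0) := by
    have hpow := (tendsto_rpow_neg_atTop (sub_pos.2 hp)).comp
      (Filter.tendsto_atTop_add_const_right _ σ (Filter.tendsto_pow_atTop (α := ℝ) two_ne_zero))
    simpa [Function.comp_def] using hpow.div_const (2 * (1 - p))
  rw [integral_Ioi_of_hasDerivAt_of_nonneg' (fun r _ => hderiv r)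
    (fun r (hr : 0 < r) => by positivity) hlim, zero_pow two_ne_zero, zero_add, zero_sub, ← div_neg]
  ring

theorem integral_norm_sq_add_rpow_neg {E : Type*} [NormedAddCommGroup E] [InnerProductSpace ℝ E]
    [FiniteDimensional ℝ E] [MeasurableSpace E] [BorelSpace E] (hE : finrank ℝ E = 2) {σ p : ℝ}
    (hσ : 0 < σ) (hp : 1 < p) :
    ∫ x : E, (‖x‖ ^ 2 + σ) ^ (-p) = π * σ ^ (1 - p) / (p - 1) := by
  have : Nontrivial E := nontrivial_of_finrank_pos (R := ℝ) (by lia)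
  have hball : volume.real (Metric.ball (0 : E) 1) = π := by
    simp [measureReal_def, InnerProductSpace.volume_ball_of_dim_even (k := 1) hE, Real.pi_nonneg]
  rw [integral_fun_norm_addHaar volume (fun r : ℝ => (r ^ 2 + σ) ^ (-p)), hE, hball]
  simp only [Nat.add_one_sub_one, pow_one, smul_eq_mul, nsmul_eq_mul, Nat.cast_ofNat,
    integral_Ioi_mul_sq_add_rpow_neg hσ hp]
  have hp₁ : p - 1 ≠ 0 := by linarith
  field_simp

end Integral

section Lattice

theorem preimage_sub_left_parallelepiped {ι E : Type*} [Fintype ι] [AddCommGroup E] [Module ℝ E]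
    (b : Basis ι ℝ E) :
    (fun x => (∑ i, b i) - x) ⁻¹' parallelepiped b = parallelepiped b := by
  classical
  ext x
  simp only [parallelepiped_basis_eq, mem_preimage, mem_ofPred_eq, map_sub, map_sum,
    Finsupp.sub_apply, Finsupp.finsetSum_apply, Basis.repr_self, Finsupp.single_apply,
    Finset.sum_ite_eq', Finset.mem_univ, if_true, mem_Icc, sub_nonneg, sub_le_self_iff, and_comm]

theorem integrableOn_id_fundamentalDomain {ι E : Type*} [Finite ι] [NormedAddCommGroup E]
    [NormedSpace ℝ E] [MeasurableSpace E] [BorelSpace E] (b : Basis ι ℝ E) (μ : Measure E)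
    [IsFiniteMeasureOnCompacts μ] : IntegrableOn id (ZSpan.fundamentalDomain b) μ := by
  have : FiniteDimensional ℝ E := b.finiteDimensional_of_finite
  have : ProperSpace E := FiniteDimensional.proper_real E
  obtain ⟨R, hR⟩ := (ZSpan.fundamentalDomain_isBounded b).exists_norm_le
  exact Measure.integrableOn_of_bounded (ZSpan.fundamentalDomain_isBounded b).measure_lt_top.ne
    aestronglyMeasurable_id
    (ae_restrict_of_forall_mem (ZSpan.fundamentalDomain_measurableSet b) hR)

theorem norm_sub_half_sum_sq_le {ι E : Type*} [Fintype ι] [NormedAddCommGroup E]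
    [NormedSpace ℝ E] {b : Basis ι ℝ E} {M : ℝ}
    (hM : ∀ t : ι → ℝ, (∀ i, |t i| ≤ 2⁻¹) → ‖∑ i, t i • b i‖ ^ 2 ≤ M) {u : E}
    (hu : u ∈ ZSpan.fundamentalDomain b) : ‖u - (2⁻¹ : ℝ) • ∑ i, b i‖ ^ 2 ≤ M := by
  have hrepr : u - (2⁻¹ : ℝ) • ∑ i, b i = ∑ i, (b.repr u i - 2⁻¹) • b i := by
    simp only [sub_smul, Finset.sum_sub_distrib, b.sum_repr, Finset.smul_sum]
  rw [hrepr]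
  refine hM _ fun i => abs_le.2 ?_
  obtain ⟨hi₀, hi₁⟩ := (ZSpan.mem_fundamentalDomain b).1 hu i
  constructor <;> linarith

theorem setAverage_fundamentalDomain {ι E : Type*} [Fintype ι] [NormedAddCommGroup E]
    [NormedSpace ℝ E] [MeasurableSpace E] [BorelSpace E] (b : Basis ι ℝ E) (μ : Measure E)
    [μ.IsAddHaarMeasure] :
    ⨍ u in ZSpan.fundamentalDomain b, u ∂μ = (2⁻¹ : ℝ) • ∑ i, b i := by
  have : FiniteDimensional ℝ E := b.finiteDimensional_of_finite
  have : ProperSpace E := FiniteDimensional.proper_real E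
  set F := ZSpan.fundamentalDomain b
  set s := ∑ i, b i
  have hF_top : μ F ≠ ⊤ := (ZSpan.fundamentalDomain_isBounded b).measure_lt_top.ne
  have : IsFiniteMeasure (μ.restrict F) := ⟨by simpa using hF_top.lt_top⟩
  have hvol : μ.real F ≠ 0 :=
    ENNReal.toReal_ne_zero.2 ⟨ZSpan.measure_fundamentalDomain_ne_zero b, hF_top⟩
  have hreflect : ∫ u in F, (s - u) ∂μ = ∫ u in F, u ∂μ := by
    rw [setIntegral_congr_set (ZSpan.fundamentalDomain_ae_parallelepiped b μ),
      setIntegral_congr_set (ZSpan.fundamentalDomain_ae_parallelepiped b μ)]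
    nth_rw 1 [← preimage_sub_left_parallelepiped b]
    exact (Measure.measurePreserving_sub_left μ s).setIntegral_preimage_emb
      (MeasurableEquiv.subLeft s).measurableEmbedding (fun x => x) _
  have hsplit : ∫ u in F, (s - u) ∂μ = μ.real F • s - ∫ u in F, u ∂μ := by
    rw [integral_sub (g := fun u => u) (integrable_const _) (integrableOn_id_fundamentalDomain b μ),
      setIntegral_const]
  have htwice : μ.real F • s = (2 : ℝ) • ∫ u in F, u ∂μ := by
    rw [two_smul, ← sub_eq_iff_eq_add, ← hsplit, hreflect]
  rw [setAverage_eq, inv_smul_eq_iff₀ hvol, smul_comm, htwice, inv_smul_smul₀ two_ne_zero]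

variable {ι E : Type*} [Fintype ι] [NormedAddCommGroup E] [InnerProductSpace ℝ E]
  [FiniteDimensional ℝ E] [MeasurableSpace E] [BorelSpace E] (b : Basis ι ℝ E)

theorem measureReal_fundamentalDomain_sq [DecidableEq ι] :
    volume.real (ZSpan.fundamentalDomain b) ^ 2 = (Matrix.gram ℝ b).det := by
  let b₀ : OrthonormalBasis ι ℝ E := (stdOrthonormalBasis ℝ E).reindex
    (Fintype.equivOfCardEq (by simp [finrank_eq_card_basis b]))
  have hb₀ : volume.real (ZSpan.fundamentalDomain b₀.toBasis) = 1 := by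
    rw [measureReal_congr (ZSpan.fundamentalDomain_ae_parallelepiped b₀.toBasis volume),
      b₀.coe_toBasis, measureReal_def, b₀.volume_parallelepiped, ENNReal.toReal_one]
  rw [ZSpan.measureReal_fundamentalDomain b volume b₀.toBasis, hb₀, mul_one, sq_abs,
    Matrix.gram_eq_conjTranspose_mul b₀, Matrix.det_mul, Matrix.det_conjTranspose, star_trivial,
    ← sq, Basis.det_apply]
  rfl

variable {σ κ p M : ℝ}

theorem summable_and_abs_mul_tsum_span_sub_integral_le (hσ : 0 < σ) (hp : finrank ℝ E < 2 * p)
    (hM : ∀ t : ι → ℝ, (∀ i, |t i| ≤ 2⁻¹) → ‖∑ i, t i • b i‖ ^ 2 ≤ M) (hκ : 2 * M ≤ κ * σ)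
    (v : E) :
    Summable (fun l : (Submodule.span ℤ (range b)).toAddSubgroup => (‖v + l‖ ^ 2 + σ) ^ (-p)) ∧
      |volume.real (ZSpan.fundamentalDomain b) *
          ∑' l : (Submodule.span ℤ (range b)).toAddSubgroup, (‖v + l‖ ^ 2 + σ) ^ (-p) -
        ∫ x : E, (‖x‖ ^ 2 + σ) ^ (-p)| ≤
      4 * p * (p + 1) * (2 + κ) ^ (p + 1) * M * ∫ x : E, (‖x‖ ^ 2 + σ) ^ (-(p + 1)) := by
  have hp₀ : 0 < p := by linarith [(finrank ℝ E).cast_nonneg (α := ℝ)]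
  have hM₀ : 0 ≤ M := (sq_nonneg _).trans (hM 0 (by norm_num))
  have hκ₀ : 0 ≤ κ := nonneg_of_mul_nonneg_left (by linarith) hσ
  have : Countable (Submodule.span ℤ (range b)).toAddSubgroup :=
    inferInstanceAs (Countable (Submodule.span ℤ (range b)))
  set c := (2⁻¹ : ℝ) • ∑ i, b i
  set K := 4 * p * (p + 1) * (2 + κ) ^ (p + 1)
  have hcentroid : ⨍ u in ZSpan.fundamentalDomain b, u = c := setAverage_fundamentalDomain b volume
  have hmidpoint := summable_and_abs_measureReal_mul_tsum_sub_integral_le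
    (ZSpan.isAddFundamentalDomain' b volume) (ZSpan.measure_fundamentalDomain_ne_zero b)
    (ZSpan.fundamentalDomain_isBounded b).measure_lt_top.ne
    (integrableOn_id_fundamentalDomain b volume)
    (f := fun x => (‖v - c + x‖ ^ 2 + σ) ^ (-p))
    (g := fun x => K * M * (‖v - c + x‖ ^ 2 + σ) ^ (-(p + 1)))
    ((integrable_norm_sq_add_rpow_neg hσ hp).comp_add_left (v - c))
    (((integrable_norm_sq_add_rpow_neg hσ (by linarith)).comp_add_left (v - c)).const_mul _)
    fun x => ?_
  · simp only [hcentroid, integral_const_mul] at hmidpoint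
    rw [integral_add_left_eq_self (fun x => (‖x‖ ^ 2 + σ) ^ (-p)),
      integral_add_left_eq_self (fun x => (‖x‖ ^ 2 + σ) ^ (-(p + 1)))] at hmidpoint
    simpa only [show ∀ w, v - c + (w + c) = v + w from fun w => by abel] using hmidpoint
  · rw [hcentroid, show v - c + (x + c) = v + x by abel]
    refine ⟨(-(2 * p) * (‖v + x‖ ^ 2 + σ) ^ (-p - 1)) • innerSL ℝ (v + x), fun u hu => ?_⟩
    have huM : ‖u - c‖ ^ 2 ≤ M := norm_sub_half_sum_sq_le hM hu
    have htaylor := abs_norm_add_sq_add_rpow_neg_sub_sub_le (x := v + x) hσ hp₀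
      ((mul_le_mul_of_nonneg_left huM two_pos.le).trans hκ)
    rw [show v + x + (u - c) = v - c + (x + u) by abel] at htaylor
    exact htaylor.trans (by gcongr)

theorem summable_and_abs_mul_tsum_zsmul_sub_integral_le (hσ : 0 < σ) (hp : finrank ℝ E < 2 * p)
    (hM : ∀ t : ι → ℝ, (∀ i, |t i| ≤ 2⁻¹) → ‖∑ i, t i • b i‖ ^ 2 ≤ M) (hκ : 2 * M ≤ κ * σ)
    (v : E) :
    Summable (fun n : ι → ℤ => (‖v + ∑ i, n i • b i‖ ^ 2 + σ) ^ (-p)) ∧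
      |volume.real (ZSpan.fundamentalDomain b) *
          ∑' n : ι → ℤ, (‖v + ∑ i, n i • b i‖ ^ 2 + σ) ^ (-p) -
        ∫ x : E, (‖x‖ ^ 2 + σ) ^ (-p)| ≤
      4 * p * (p + 1) * (2 + κ) ^ (p + 1) * M * ∫ x : E, (‖x‖ ^ 2 + σ) ^ (-(p + 1)) := by
  let e : (ι → ℤ) ≃ (Submodule.span ℤ (range b)).toAddSubgroup :=
    (b.restrictScalars ℤ).equivFun.symm.toEquiv
  have he (n : ι → ℤ) : (e n : E) = ∑ i, n i • b i := by simp [e, Basis.equivFun_symm_apply]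
  simpa only [← e.summable_iff, ← e.tsum_eq, Function.comp_def, he]
    using summable_and_abs_mul_tsum_span_sub_integral_le b hσ hp hM hκ v

end Lattice

section RealForm

variable {a11 a22 : ℝ} {a12 : ℂ}

-- The basis is the Cholesky factor of the prescribed Gram matrix.
theorem exists_basis_complex_gram_eq {a r d : ℝ} (ha : 0 < a) (hdet : 0 < a * d - r ^ 2) :
    ∃ b : Basis (Fin 2) ℝ ℂ, Matrix.gram ℝ b = !![a, r; r, d] := by
  let v : Fin 2 → ℂ := ![(√a : ℝ), ⟨r / √a, √(a * d - r ^ 2) / √a⟩]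
  have hsqrt : √a ^ 2 = a := Real.sq_sqrt ha.le
  have hsqrt₀ : √a ≠ 0 := (Real.sqrt_pos.2 ha).ne'
  have h00 : ⟪v 0, v 0⟫ = a := (real_inner_self_eq_norm_sq _).trans (by simp [v, hsqrt])
  have h01 : ⟪v 0, v 1⟫ = r := by
    rw [Complex.inner]
    simp [v, div_mul_cancel₀ _ hsqrt₀]
  have h11 : ⟪v 1, v 1⟫ = d :=
    calc ⟪v 1, v 1⟫ = r / √a * (r / √a) + √(a * d - r ^ 2) / √a * (√(a * d - r ^ 2) / √a) := by
          simp [v, Complex.sq_norm, Complex.normSq_mk]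
      _ = (r ^ 2 + √(a * d - r ^ 2) ^ 2) / √a ^ 2 := by ring
      _ = d := by
          rw [hsqrt, Real.sq_sqrt hdet.le, add_sub_cancel, mul_div_cancel_left₀ _ ha.ne']
  have hgram : Matrix.gram ℝ v = !![a, r; r, d] := by
    rw [Matrix.eta_fin_two (Matrix.gram ℝ v)]
    simp only [Matrix.gram_apply, h00, h01, h11, real_inner_comm (v 0) (v 1)]
  have hli : LinearIndependent ℝ v := Matrix.linearIndependent_of_det_gram_ne_zero (by
    rw [hgram, Matrix.det_fin_two_of, ← sq]
    exact hdet.ne')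
  exact ⟨basisOfLinearIndependentOfCardEqFinrank hli (by simp), by simpa using hgram⟩

theorem norm_smul_add_smul_sq_eq_QR {E : Type*} [NormedAddCommGroup E] [InnerProductSpace ℝ E]
    {v : Fin 2 → E} (hv : Matrix.gram ℝ v = !![a11, a12.re; a12.re, a22]) (x y : ℝ) :
    ‖x • v 0 + y • v 1‖ ^ 2 = QR a11 a22 a12 x y := by
  have h00 : ⟪v 0, v 0⟫ = a11 := congr_fun₂ hv 0 0
  have h01 : ⟪v 0, v 1⟫ = a12.re := congr_fun₂ hv 0 1
  have h11 : ⟪v 1, v 1⟫ = a22 := congr_fun₂ hv 1 1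
  rw [norm_add_sq_real, ← real_inner_self_eq_norm_sq, ← real_inner_self_eq_norm_sq]
  simp only [real_inner_smul_left, real_inner_smul_right, h00, h01, h11, QR]
  ring

variable {κ L : ℝ}

theorem le_of_QR_le (hL : ∀ x y, QR a11 a22 a12 x y ≤ L * (x ^ 2 + y ^ 2)) : a11 ≤ L := by
  simpa [QR] using hL 1 0

theorem QR_le_half (hL₀ : 0 ≤ L) (hL : ∀ x y, QR a11 a22 a12 x y ≤ L * (x ^ 2 + y ^ 2)) {x y : ℝ}
    (hx : |x| ≤ 2⁻¹) (hy : |y| ≤ 2⁻¹) : QR a11 a22 a12 x y ≤ L / 2 :=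
  calc QR a11 a22 a12 x y ≤ L * (|x| ^ 2 + |y| ^ 2) := by simpa only [sq_abs] using hL x y
    _ ≤ L * (2⁻¹ ^ 2 + 2⁻¹ ^ 2) := by gcongr
    _ = L / 2 := by ring

theorem summable_and_abs_sqrt_mul_tsum_QR_sub_le {σ p : ℝ} (ha : 0 < a11)
    (hdet : 0 < a11 * a22 - a12.re ^ 2) (hσ : 0 < σ) (hp : 1 < p)
    (hL : ∀ x y, QR a11 a22 a12 x y ≤ L * (x ^ 2 + y ^ 2)) (hκ : L ≤ κ * σ) (v₁ v₂ : ℝ) :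
    Summable (fun n : ℤ × ℤ => (QR a11 a22 a12 (v₁ + n.1) (v₂ + n.2) + σ) ^ (-p)) ∧
      |√(a11 * a22 - a12.re ^ 2) *
            ∑' n : ℤ × ℤ, (QR a11 a22 a12 (v₁ + n.1) (v₂ + n.2) + σ) ^ (-p) -
          π * σ ^ (1 - p) / (p - 1)| ≤
        2 * π * (p + 1) * (2 + κ) ^ (p + 1) * L * σ ^ (-p) := by
  obtain ⟨b, hb⟩ := exists_basis_complex_gram_eq ha hdet
  have hvol : volume.real (ZSpan.fundamentalDomain b) = √(a11 * a22 - a12.re ^ 2) := by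
    rw [← Real.sqrt_sq measureReal_nonneg, measureReal_fundamentalDomain_sq, hb,
      Matrix.det_fin_two_of, ← sq]
  have hM (t : Fin 2 → ℝ) (ht : ∀ i, |t i| ≤ 2⁻¹) : ‖∑ i, t i • b i‖ ^ 2 ≤ L / 2 := by
    rw [Fin.sum_univ_two, norm_smul_add_smul_sq_eq_QR hb]
    exact QR_le_half (ha.le.trans (le_of_QR_le hL)) hL (ht 0) (ht 1)
  have hterm (n : Fin 2 → ℤ) : ‖v₁ • b 0 + v₂ • b 1 + ∑ i, n i • b i‖ ^ 2 =
      QR a11 a22 a12 (v₁ + n 0) (v₂ + n 1) := by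
    rw [← norm_smul_add_smul_sq_eq_QR hb, Fin.sum_univ_two, add_smul, add_smul,
      Int.cast_smul_eq_zsmul, Int.cast_smul_eq_zsmul, add_add_add_comm]
  have hlattice := summable_and_abs_mul_tsum_zsmul_sub_integral_le b (κ := κ) (p := p) hσ
    (by rw [Complex.finrank_real_complex]; push_cast; linarith) hM (by linarith)
    (v₁ • b 0 + v₂ • b 1)
  simp only [hterm, hvol, integral_norm_sq_add_rpow_neg Complex.finrank_real_complex hσ hp,
    integral_norm_sq_add_rpow_neg Complex.finrank_real_complex hσ (by linarith : 1 < p + 1)]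
    at hlattice
  rw [← (finTwoArrowEquiv ℤ).summable_iff, ← (finTwoArrowEquiv ℤ).tsum_eq]
  refine ⟨hlattice.1, hlattice.2.trans_eq ?_⟩
  rw [show 1 - (p + 1) = -p by ring, add_sub_cancel_right]
  field_simp
  ring

theorem abs_mul_tsum_QR_add_le {ρ : ℝ} (ha : 0 < a11) (hdet : 0 < a11 * a22 - a12.re ^ 2)
    (hρ : 0 < ρ) (hL : ∀ x y, QR a11 a22 a12 x y ≤ L * (x ^ 2 + y ^ 2)) (hκ : L ≤ κ * ρ ^ 2)
    (v₁ v₂ : ℝ) :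
    |-(1 / (8 * π ^ 2)) *
          ∑' n : ℤ × ℤ, (QR a11 a22 a12 (v₁ + n.1) (v₂ + n.2) + ρ ^ 2) ^ (-(3 / 2 : ℝ)) +
        1 / (4 * π * ρ * √(a11 * a22 - a12.re ^ 2))| ≤
      L * (2 + κ) ^ (5 / 2 : ℝ) / (ρ ^ 3 * √(a11 * a22 - a12.re ^ 2)) := by
  have hbound := (summable_and_abs_sqrt_mul_tsum_QR_sub_le ha hdet (sq_pos_of_pos hρ)
    (p := 3 / 2) (by norm_num) hL hκ v₁ v₂).2
  have hL₀ : 0 ≤ L := ha.le.trans (le_of_QR_le hL)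
  have hκ₀ : 0 ≤ κ := nonneg_of_mul_nonneg_left (hL₀.trans hκ) (by positivity)
  set T := ∑' n : ℤ × ℤ, (QR a11 a22 a12 (v₁ + n.1) (v₂ + n.2) + ρ ^ 2) ^ (-(3 / 2 : ℝ))
  set d := √(a11 * a22 - a12.re ^ 2)
  have hd : 0 < d := Real.sqrt_pos.2 hdet
  have hpow₁ : (ρ ^ 2) ^ (1 - 3 / 2 : ℝ) = ρ⁻¹ := by
    rw [← Real.rpow_natCast_mul hρ.le, ← Real.rpow_neg_one]
    norm_num
  have hpow₃ : (ρ ^ 2) ^ (-(3 / 2) : ℝ) = (ρ ^ 3)⁻¹ := by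
    rw [← Real.rpow_natCast_mul hρ.le, ← Real.rpow_natCast, ← Real.rpow_neg hρ.le]
    norm_num
  rw [hpow₁, hpow₃] at hbound
  have hfactor : -(1 / (8 * π ^ 2)) * T + 1 / (4 * π * ρ * d) =
      -((d * T - π * ρ⁻¹ / (3 / 2 - 1)) / (8 * π ^ 2 * d)) := by
    field_simp
    ring
  calc |-(1 / (8 * π ^ 2)) * T + 1 / (4 * π * ρ * d)|
      = |d * T - π * ρ⁻¹ / (3 / 2 - 1)| / (8 * π ^ 2 * d) := by
        rw [hfactor, abs_neg, abs_div, abs_of_pos (by positivity : 0 < 8 * π ^ 2 * d)]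
    _ ≤ 2 * π * (3 / 2 + 1) * (2 + κ) ^ (3 / 2 + 1 : ℝ) * L * (ρ ^ 3)⁻¹ / (8 * π ^ 2 * d) := by
        gcongr
    _ = 5 / (8 * π) * (L * (2 + κ) ^ (5 / 2 : ℝ) / (ρ ^ 3 * d)) := by
        rw [show (3 / 2 + 1 : ℝ) = 5 / 2 by norm_num]
        field_simp
    _ ≤ L * (2 + κ) ^ (5 / 2 : ℝ) / (ρ ^ 3 * d) := by
        refine mul_le_of_le_one_left (by positivity) ((div_le_one (by positivity)).2 ?_)
        linarith [Real.pi_gt_three]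

end RealForm

section HermitianForm

variable {a11 a22 : ℝ} {a12 : ℂ}

theorem det_add_im_sq : a11 * a22 - Complex.normSq a12 + a12.im ^ 2 = a11 * a22 - a12.re ^ 2 := by
  rw [Complex.normSq_apply]
  ring

theorem Qh_ofReal (x y : ℝ) : Qh a11 a22 a12 x y = QR a11 a22 a12 x y := by
  simp only [Qh, QR, Complex.normSq_ofReal, Complex.conj_ofReal, Complex.re_mul_ofReal]
  ring

-- `Qh` is minimised over the real parts, with the imaginary parts fixed, where both shifted
-- arguments vanish; the last summand is this minimum.
theorem Qh_eq_QR_add_mul_QR_im (hD : a11 * a22 - a12.re ^ 2 ≠ 0) (w1 w2 : ℂ) :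
    Qh a11 a22 a12 w1 w2 =
      QR a11 a22 a12
        (w1.re + a12.im / (a11 * a22 - a12.re ^ 2) * (a12.re * w1.im + a22 * w2.im))
        (w2.re - a12.im / (a11 * a22 - a12.re ^ 2) * (a11 * w1.im + a12.re * w2.im)) +
      (a11 * a22 - Complex.normSq a12) / (a11 * a22 - a12.re ^ 2) * QR a11 a22 a12 w1.im w2.im := by
  simp only [Qh, QR, Complex.normSq_apply, Complex.mul_re, Complex.mul_im, Complex.conj_re,
    Complex.conj_im]
  field_simp
  ring

theorem exists_Qh_add_eq_QR_add_rhoH_sq (hD : a11 * a22 - a12.re ^ 2 ≠ 0) {η1 η2 : ℂ} {μ : ℝ}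
    (hρ : 0 < rhoH a11 a22 a12 η1.im η2.im μ) :
    ∃ v₁ v₂ : ℝ, ∀ x y : ℝ,
      Qh a11 a22 a12 (η1 + x) (η2 + y) + (a11 * a22 - Complex.normSq a12) * μ ^ 2 =
        QR a11 a22 a12 (v₁ + x) (v₂ + y) + rhoH a11 a22 a12 η1.im η2.im μ ^ 2 := by
  refine ⟨η1.re + a12.im / (a11 * a22 - a12.re ^ 2) * (a12.re * η1.im + a22 * η2.im),
    η2.re - a12.im / (a11 * a22 - a12.re ^ 2) * (a11 * η1.im + a12.re * η2.im), fun x y => ?_⟩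
  rw [Qh_eq_QR_add_mul_QR_im hD, rhoH, Real.sq_sqrt (Real.sqrt_pos.1 hρ).le, det_add_im_sq]
  simp only [Complex.add_re, Complex.add_im, Complex.ofReal_re, Complex.ofReal_im, add_zero,
    add_sub_right_comm, add_right_comm _ _ x, add_assoc]

theorem sq_mul_sqrt_le_sq {c A ρ : ℝ} (hc : 0 ≤ c) (hA : 0 ≤ A) (h : c * A ^ (1 / 4 : ℝ) ≤ ρ) :
    c ^ 2 * √A ≤ ρ ^ 2 :=
  calc c ^ 2 * √A = (c * A ^ (1 / 4 : ℝ)) ^ 2 := by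
        rw [mul_pow, ← Real.rpow_mul_natCast hA, Real.sqrt_eq_rpow]
        norm_num
    _ ≤ ρ ^ 2 := by gcongr

theorem statement13_general {C₀ c : ℝ} (hc : 0 < c) (ha : 0 < a11)
    (hA : 0 < a11 * a22 - Complex.normSq a12)
    (hell : ∀ w1 w2 : ℂ, Qh a11 a22 a12 w1 w2 ≤
      C₀ * √(a11 * a22 - Complex.normSq a12) * (Complex.normSq w1 + Complex.normSq w2))
    {η1 η2 : ℂ} {μ : ℝ}
    (hρ : c * (a11 * a22 - Complex.normSq a12) ^ (1 / 4 : ℝ) ≤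
      rhoH a11 a22 a12 η1.im η2.im μ) :
    Summable (fun n : ℤ × ℤ =>
      |(Qh a11 a22 a12 (η1 + (n.1 : ℂ)) (η2 + (n.2 : ℂ))
        + (a11 * a22 - Complex.normSq a12) * μ ^ 2) ^ (-(3 : ℝ) / 2)|) ∧
    |(-(1 / (8 * π ^ 2)) * ∑' n : ℤ × ℤ,
        (Qh a11 a22 a12 (η1 + (n.1 : ℂ)) (η2 + (n.2 : ℂ))
          + (a11 * a22 - Complex.normSq a12) * μ ^ 2) ^ (-(3 : ℝ) / 2))
      + 1 / (4 * π * rhoH a11 a22 a12 η1.im η2.im μ *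
          √(a11 * a22 - Complex.normSq a12 + a12.im ^ 2))|
    ≤ C₀ * (2 + C₀ / c ^ 2) ^ (5 / 2 : ℝ) / rhoH a11 a22 a12 η1.im η2.im μ ^ 3 := by
  have hAD : a11 * a22 - Complex.normSq a12 ≤ a11 * a22 - a12.re ^ 2 := by
    rw [← det_add_im_sq]
    exact le_add_of_nonneg_right (sq_nonneg _)
  have hD : 0 < a11 * a22 - a12.re ^ 2 := hA.trans_le hAD
  have hρ₀ : 0 < rhoH a11 a22 a12 η1.im η2.im μ := lt_of_lt_of_le (by positivity) hρ
  obtain ⟨v₁, v₂, hv⟩ := exists_Qh_add_eq_QR_add_rhoH_sq hD.ne' hρ₀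
  have hL (x y : ℝ) : QR a11 a22 a12 x y ≤
      C₀ * √(a11 * a22 - Complex.normSq a12) * (x ^ 2 + y ^ 2) := by
    simpa only [Qh_ofReal, Complex.normSq_ofReal, ← sq] using hell x y
  have hC₀ : 0 ≤ C₀ :=
    nonneg_of_mul_nonneg_left (ha.le.trans (le_of_QR_le hL)) (Real.sqrt_pos.2 hA)
  simp only [← Complex.ofReal_intCast, hv, neg_div, det_add_im_sq]
  generalize rhoH a11 a22 a12 η1.im η2.im μ = ρ at *
  have hκ : C₀ * √(a11 * a22 - Complex.normSq a12) ≤ C₀ / c ^ 2 * ρ ^ 2 := by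
    rw [div_mul_eq_mul_div, mul_div_assoc]
    gcongr
    exact (le_div_iff₀' (by positivity)).2 (sq_mul_sqrt_le_sq hc.le hA.le hρ)
  refine ⟨(summable_and_abs_sqrt_mul_tsum_QR_sub_le ha hD (sq_pos_of_pos hρ₀) (by norm_num) hL hκ
    v₁ v₂).1.abs, (abs_mul_tsum_QR_add_le ha hD hρ₀ hL hκ v₁ v₂).trans ?_⟩
  calc C₀ * √(a11 * a22 - Complex.normSq a12) * (2 + C₀ / c ^ 2) ^ (5 / 2 : ℝ) /
          (ρ ^ 3 * √(a11 * a22 - a12.re ^ 2))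
      = C₀ * (2 + C₀ / c ^ 2) ^ (5 / 2 : ℝ) / ρ ^ 3 *
          (√(a11 * a22 - Complex.normSq a12) / √(a11 * a22 - a12.re ^ 2)) := by ring
    _ ≤ C₀ * (2 + C₀ / c ^ 2) ^ (5 / 2 : ℝ) / ρ ^ 3 :=
        mul_le_of_le_one_right (by positivity)
          (div_le_one_of_le₀ (Real.sqrt_le_sqrt hAD) (Real.sqrt_nonneg _))

end HermitianForm

/-- far-field asymptote of the doubly periodic Newtonian potential
`γ = −(1/8π²) Σ_{(n₁,n₂)∈ℤ²} (Q(η₁+n₁, η₂+n₂) + Aμ²)^{−3/2}`: for `ϱ ≥ c·A^{1/4}` the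
series converges absolutely and `|γ + 1/(4πϱ√𝔸)| ≤ C·ϱ^{−3}`. -/
theorem statement13 : ∀ C₀ : ℝ, 1 ≤ C₀ → ∃ c C : ℝ, 1 ≤ c ∧ 0 < C ∧
    ∀ (a11 a22 : ℝ) (a12 : ℂ), 0 < a11 → 0 < a22 →
      1 ≤ a11 * a22 - Complex.normSq a12 → IsEllipticH C₀ a11 a22 a12 →
    ∀ (η1 η2 : ℂ) (μ : ℝ),
      c * (a11 * a22 - Complex.normSq a12) ^ ((1 : ℝ) / 4)
        ≤ rhoH a11 a22 a12 η1.im η2.im μ →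
      Summable (fun n : ℤ × ℤ =>
        |(Qh a11 a22 a12 (η1 + (n.1 : ℂ)) (η2 + (n.2 : ℂ))
          + (a11 * a22 - Complex.normSq a12) * μ ^ 2) ^ (-(3 : ℝ) / 2)|) ∧
      |(-(1 / (8 * Real.pi ^ 2)) * ∑' n : ℤ × ℤ,
          (Qh a11 a22 a12 (η1 + (n.1 : ℂ)) (η2 + (n.2 : ℂ))
            + (a11 * a22 - Complex.normSq a12) * μ ^ 2) ^ (-(3 : ℝ) / 2))
        + 1 / (4 * Real.pi * rhoH a11 a22 a12 η1.im η2.im μ *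
            Real.sqrt (a11 * a22 - Complex.normSq a12 + a12.im ^ 2))|
      ≤ C / rhoH a11 a22 a12 η1.im η2.im μ ^ 3 := by
  intro C₀ _
  exact ⟨1, C₀ * (2 + C₀ / 1 ^ 2) ^ (5 / 2 : ℝ), le_rfl, by positivity,
    fun _ _ _ ha _ hA hell _ _ _ => statement13_general one_pos ha (one_pos.trans_le hA)
      fun w1 w2 => (hell w1 w2).2⟩
end

section
/- Let a be a positive definite Hermitian 2×2 complex matrix with A = det a > 0 and 𝔸 = A + (Im a₁₂)². Fix y = (y₁, y₂) ∈ ℝ² with y ≠ 0 and μ ∈ ℝ, write Q_w = Q(x₁ + iy₁, x₂ + iy₂) and c = (A/𝔸)·Qℝ(y). Then the following integrals over x = (x₁, x₂) ∈ ℝ² converge, and: I₀₁ := ∫_{ℝ²} dx / ( Q_w · (Q_w + Aμ²)^{3/2} ) = (π/√𝔸) ∫_c^∞ ds / ( s·(s + Aμ²)^{3/2} ); I₀₂ := ∫_{ℝ²} dx / ( Q_w² · (Q_w + Aμ²)^{1/2} ) = −(1/2)·I₀₁ + π√𝔸/( A·ϱ·Qℝ(y) ); I₀₃ := ∫_{ℝ²}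 dx / Q_w² = π√𝔸/( A·Qℝ(y) ), where ϱ = √(c + Aμ²). -/
open MeasureTheory

/-- `Q_w` evaluated at `w = (x₁+iy₁, x₂+iy₂)`. -/
noncomputable def Qw (a11 a22 : ℝ) (a12 : ℂ) (y1 y2 : ℝ) (x : ℝ × ℝ) : ℝ :=
  Qh a11 a22 a12 ((x.1 : ℂ) + (y1 : ℂ) * Complex.I) ((x.2 : ℂ) + (y2 : ℂ) * Complex.I)

/-!
On the fibre `Im w = y` the Hermitian form is a shifted real form: `Q_w = c + Qℝ(x - x₀)`. Since
`Qℝ` has determinant `𝔸`, the ellipse `{Q_w ≤ t}` has area `π (t - c) / √𝔸` for `t ≥ c`, that is,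
Lebesgue measure on the plane is pushed forward by `Q_w` to `π / √𝔸` times Lebesgue measure on
`(c, ∞)`. Each integral thereby becomes one-dimensional, and `I₀₂` and `I₀₃` follow from
`d/ds (-1 / (s (s + K)ᵖ)) = 1 / (s² (s + K)ᵖ) + p / (s (s + K)ᵖ⁺¹)` with `p = 1/2` and `p = 0`.
-/

open Set Filter Topology Module

section NormPow

variable {E : Type*} [NormedAddCommGroup E] [NormedSpace ℝ E] [MeasurableSpace E] [BorelSpace E]
  [FiniteDimensional ℝ E] [Nontrivial E] (ν : Measure E) [ν.IsAddHaarMeasure]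

lemma addHaar_setOf_norm_pow_finrank_le (t : ℝ) :
    ν {x | ‖x‖ ^ finrank ℝ E ≤ t} = ν (Metric.ball 0 1) * ENNReal.ofReal t := by
  have hn : finrank ℝ E ≠ 0 := finrank_pos.ne'
  rcases lt_or_ge t 0 with ht | ht
  · have hempty : {x : E | ‖x‖ ^ finrank ℝ E ≤ t} = ∅ :=
      eq_empty_of_forall_notMem fun x hx => (ht.trans_le (by positivity)).not_ge hx
    rw [hempty, measure_empty, ENNReal.ofReal_of_nonpos ht.le, mul_zero]
  · obtain ⟨r, hr, rfl⟩ : ∃ r : ℝ, 0 ≤ r ∧ r ^ finrank ℝ E = t :=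
      ⟨t ^ ((finrank ℝ E : ℝ)⁻¹), by positivity, Real.rpow_inv_natCast_pow ht hn⟩
    have hball : {x : E | ‖x‖ ^ finrank ℝ E ≤ r ^ finrank ℝ E} = Metric.closedBall 0 r := by
      ext x
      rw [mem_ofPred_eq, mem_closedBall_zero_iff, pow_le_pow_iff_left₀ (norm_nonneg x) hr hn]
    rw [hball, Measure.addHaar_closedBall ν 0 hr, mul_comm]

lemma map_norm_pow_finrank_addHaar :
    ν.map (fun x => ‖x‖ ^ finrank ℝ E) = ν (Metric.ball 0 1) • volume.restrict (Ioi (0 : ℝ)) := by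
  have hmap (t : ℝ) : ν.map (fun x => ‖x‖ ^ finrank ℝ E) (Iic t)
      = ν (Metric.ball 0 1) * ENNReal.ofReal t := by
    rw [Measure.map_apply (by fun_prop) measurableSet_Iic]
    exact addHaar_setOf_norm_pow_finrank_le ν t
  refine Measure.ext_of_generateFrom_of_iUnion (range Iic) (fun n : ℕ => Iic (n : ℝ))
    (BorelSpace.measurable_eq.trans (borel_eq_generateFrom_Iic ℝ)) isPiSystem_Iic
    (iUnion_eq_univ_iff.2 exists_nat_ge) (fun n => mem_range_self _) (fun n => ?_) ?_
  · rw [hmap]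
    exact ENNReal.mul_ne_top measure_ball_lt_top.ne ENNReal.ofReal_ne_top
  · rintro _ ⟨t, rfl⟩
    rw [hmap, Measure.smul_apply, Measure.restrict_apply measurableSet_Iic, inter_comm,
      Ioi_inter_Iic, Real.volume_Ioc, sub_zero, smul_eq_mul]

end NormPow

lemma map_normSq_volume :
    volume.map Complex.normSq = ENNReal.ofReal Real.pi • volume.restrict (Ioi (0 : ℝ)) := by
  have h := map_norm_pow_finrank_addHaar (volume : Measure ℂ)
  simp only [Complex.finrank_real_complex, ← Complex.normSq_eq_norm_sq] at h
  rw [h, Complex.volume_ball, ENNReal.ofReal_one, one_pow, one_mul, ← NNReal.coe_real_pi,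
    ENNReal.ofReal_coe_nnreal]

lemma map_sq_add_sq_volume :
    volume.map (fun u : ℝ × ℝ => u.1 ^ 2 + u.2 ^ 2)
      = ENNReal.ofReal Real.pi • volume.restrict (Ioi (0 : ℝ)) := by
  have hcomp : Complex.normSq
      = (fun u : ℝ × ℝ => u.1 ^ 2 + u.2 ^ 2) ∘ Complex.measurableEquivRealProd := by
    ext z
    simp only [Function.comp_apply, Complex.measurableEquivRealProd_apply, Complex.normSq_apply]
    ring
  rw [← map_normSq_volume, hcomp, ← Measure.map_map (by fun_prop) (by fun_prop),
    Complex.volume_preserving_equiv_real_prod.map_eq]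

/-- The determinant `A` of the Hermitian matrix with diagonal `a11`, `a22` and upper off-diagonal
entry `a12`. -/
noncomputable def hermDet (a11 a22 : ℝ) (a12 : ℂ) : ℝ :=
  a11 * a22 - Complex.normSq a12

/-- The constant `𝔸`, which is the determinant of the real form `QR` by `reDet_eq`. -/
noncomputable def reDet (a11 a22 : ℝ) (a12 : ℂ) : ℝ :=
  hermDet a11 a22 a12 + a12.im ^ 2

/-- The constant `c`, which is the minimum of the Hermitian form on the fibre `Im w = y`. -/
noncomputable def fiberMin (a11 a22 : ℝ) (a12 : ℂ) (y1 y2 : ℝ) : ℝ :=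
  hermDet a11 a22 a12 / reDet a11 a22 a12 * QR a11 a22 a12 y1 y2

/-- The real part of the point of the fibre `Im w = y` at which the Hermitian form is minimal. -/
noncomputable def fiberCenter (a11 a22 : ℝ) (a12 : ℂ) (y1 y2 : ℝ) : ℝ × ℝ :=
  (a12.im / reDet a11 a22 a12) • (-(a12.re * y1 + a22 * y2), a11 * y1 + a12.re * y2)

section Forms

variable {a11 a22 : ℝ} {a12 : ℂ}

lemma reDet_eq : reDet a11 a22 a12 = a11 * a22 - a12.re ^ 2 := by
  rw [reDet, hermDet, Complex.normSq_apply]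
  ring

lemma reDet_pos (hA : 0 < hermDet a11 a22 a12) : 0 < reDet a11 a22 a12 :=
  add_pos_of_pos_of_nonneg hA (sq_nonneg _)

lemma QR_eq_sq_add_sq (ha : 0 < a11) (hD : 0 ≤ reDet a11 a22 a12) (x1 x2 : ℝ) :
    QR a11 a22 a12 x1 x2
      = (√a11 * x1 + a12.re / √a11 * x2) ^ 2 + (√(reDet a11 a22 a12) / √a11 * x2) ^ 2 := by
  have hsqrt : √a11 ≠ 0 := (Real.sqrt_pos.2 ha).ne'
  have hsq : √a11 ^ 2 = a11 := Real.sq_sqrt ha.le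
  calc QR a11 a22 a12 x1 x2
      = a11 * x1 ^ 2 + 2 * a12.re * x1 * x2 + (a12.re ^ 2 + reDet a11 a22 a12) / a11 * x2 ^ 2 := by
        rw [QR, reDet_eq]
        field_simp
        ring
    _ = √a11 ^ 2 * x1 ^ 2 + 2 * a12.re * x1 * x2
          + (a12.re ^ 2 + √(reDet a11 a22 a12) ^ 2) / √a11 ^ 2 * x2 ^ 2 := by
        rw [hsq, Real.sq_sqrt hD]
    _ = _ := by
        field_simp
        ring

lemma QR_pos (ha : 0 < a11) (hD : 0 < reDet a11 a22 a12) {y1 y2 : ℝ} (hy : ¬(y1 = 0 ∧ y2 = 0)) :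
    0 < QR a11 a22 a12 y1 y2 := by
  rw [QR_eq_sq_add_sq ha hD.le]
  rcases eq_or_ne y2 0 with rfl | hy2
  · have hy1 : y1 ≠ 0 := fun h => hy ⟨h, rfl⟩
    rw [mul_zero, add_zero]
    positivity
  · positivity

lemma map_QR_volume (ha : 0 < a11) (hD : 0 < reDet a11 a22 a12) :
    volume.map (fun x : ℝ × ℝ => QR a11 a22 a12 x.1 x.2)
      = ENNReal.ofReal (Real.pi / √(reDet a11 a22 a12)) • volume.restrict (Ioi (0 : ℝ)) := by
  have hsqrtD : 0 < √(reDet a11 a22 a12) := Real.sqrt_pos.2 hD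
  let L : ℝ × ℝ →ₗ[ℝ] ℝ × ℝ := Matrix.toLin (.finTwoProd ℝ) (.finTwoProd ℝ)
    !![√a11, a12.re / √a11; 0, √(reDet a11 a22 a12) / √a11]
  have hdet : LinearMap.det L = √(reDet a11 a22 a12) := by
    simp only [L, LinearMap.det_toLin, Matrix.det_fin_two_of]
    field_simp
    ring
  have hcomp : (fun x : ℝ × ℝ => QR a11 a22 a12 x.1 x.2)
      = (fun u : ℝ × ℝ => u.1 ^ 2 + u.2 ^ 2) ∘ L := by
    ext x
    simp only [Function.comp_apply, L, Matrix.toLin_finTwoProd_apply, zero_mul, zero_add]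
    exact QR_eq_sq_add_sq ha hD.le x.1 x.2
  have hL : Measurable L := L.continuous_of_finiteDimensional.measurable
  rw [hcomp, ← Measure.map_map (by fun_prop) hL,
    Measure.map_linearMap_addHaar_eq_smul_addHaar volume (hdet ▸ hsqrtD.ne'), hdet,
    Measure.map_smul, map_sq_add_sq_volume, smul_smul, abs_of_pos (inv_pos.2 hsqrtD),
    ← ENNReal.ofReal_mul (inv_pos.2 hsqrtD).le, ← div_eq_inv_mul]

lemma Qw_eq_QR_add_QR (y1 y2 : ℝ) (x : ℝ × ℝ) :
    Qw a11 a22 a12 y1 y2 x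
      = QR a11 a22 a12 x.1 x.2 + QR a11 a22 a12 y1 y2
        + 2 * a12.im * (x.1 * y2 - x.2 * y1) := by
  simp only [Qw, Qh, QR, Complex.normSq_add_mul_I, map_add, map_mul, Complex.conj_ofReal,
    Complex.conj_I, Complex.add_re, Complex.add_im, Complex.mul_re, Complex.mul_im,
    Complex.neg_re, Complex.neg_im, Complex.ofReal_re, Complex.ofReal_im, Complex.I_re,
    Complex.I_im]
  ring

lemma Qw_eq_fiberMin_add_QR (hD : reDet a11 a22 a12 ≠ 0) (y1 y2 : ℝ) (x : ℝ × ℝ) :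
    Qw a11 a22 a12 y1 y2 x
      = fiberMin a11 a22 a12 y1 y2
        + QR a11 a22 a12 (x - fiberCenter a11 a22 a12 y1 y2).1
            (x - fiberCenter a11 a22 a12 y1 y2).2 := by
  have hA : hermDet a11 a22 a12 = reDet a11 a22 a12 - a12.im ^ 2 := by rw [reDet]; ring
  rw [Qw_eq_QR_add_QR, fiberMin, fiberCenter, hA]
  simp only [reDet_eq, QR, Prod.fst_sub, Prod.snd_sub, Prod.smul_fst, Prod.smul_snd,
    smul_eq_mul] at hD ⊢
  field_simp
  ring

lemma continuous_Qw (y1 y2 : ℝ) : Continuous (Qw a11 a22 a12 y1 y2) := by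
  simp only [funext (Qw_eq_QR_add_QR y1 y2), QR]
  fun_prop

lemma map_Qw_volume (ha : 0 < a11) (hD : 0 < reDet a11 a22 a12) (y1 y2 : ℝ) :
    volume.map (Qw a11 a22 a12 y1 y2)
      = ENNReal.ofReal (Real.pi / √(reDet a11 a22 a12)) •
        volume.restrict (Ioi (fiberMin a11 a22 a12 y1 y2)) := by
  set c := fiberMin a11 a22 a12 y1 y2
  set x₀ := fiberCenter a11 a22 a12 y1 y2
  have hcomp : Qw a11 a22 a12 y1 y2
      = (c + ·) ∘ (fun x : ℝ × ℝ => QR a11 a22 a12 x.1 x.2) ∘ (· - x₀) :=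
    funext (Qw_eq_fiberMin_add_QR hD.ne' y1 y2)
  have hQR : Measurable (fun x : ℝ × ℝ => QR a11 a22 a12 x.1 x.2) := by
    unfold QR
    fun_prop
  have hshift : (volume.restrict (Ioi 0)).map (c + ·) = volume.restrict (Ioi c) := by
    have h := ((measurePreserving_add_left volume c).restrict_preimage
      (measurableSet_Ioi (a := c))).map_eq
    rwa [preimage_const_add_Ioi, sub_self] at h
  rw [hcomp, ← Measure.map_map (by fun_prop) (by fun_prop),
    ← Measure.map_map hQR (by fun_prop), (measurePreserving_sub_right volume x₀).map_eq,
    map_QR_volume ha hD, Measure.map_smul, hshift]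

lemma integrable_comp_Qw (ha : 0 < a11) (hD : 0 < reDet a11 a22 a12) {y1 y2 : ℝ} {F : ℝ → ℝ}
    (hF : IntegrableOn F (Ioi (fiberMin a11 a22 a12 y1 y2))) :
    Integrable (fun x => F (Qw a11 a22 a12 y1 y2 x)) := by
  refine Integrable.comp_measurable ?_ (continuous_Qw y1 y2).measurable
  rw [map_Qw_volume ha hD]
  exact hF.smul_measure ENNReal.ofReal_ne_top

lemma integral_comp_Qw (ha : 0 < a11) (hD : 0 < reDet a11 a22 a12) {y1 y2 : ℝ} {F : ℝ → ℝ}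
    (hF : AEStronglyMeasurable F (volume.restrict (Ioi (fiberMin a11 a22 a12 y1 y2)))) :
    ∫ x, F (Qw a11 a22 a12 y1 y2 x)
      = Real.pi / √(reDet a11 a22 a12) * ∫ s in Ioi (fiberMin a11 a22 a12 y1 y2), F s := by
  have hmap := map_Qw_volume ha hD y1 y2
  rw [← integral_map (continuous_Qw y1 y2).aemeasurable
      (hmap ▸ hF.smul_measure _), hmap, integral_smul_measure,
    ENNReal.toReal_ofReal (by positivity), smul_eq_mul]

lemma pi_div_sqrt_reDet_mul_inv (y1 y2 t : ℝ) :
    Real.pi / √(reDet a11 a22 a12) * (fiberMin a11 a22 a12 y1 y2 * t)⁻¹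
      = Real.pi * √(reDet a11 a22 a12) / (hermDet a11 a22 a12 * t * QR a11 a22 a12 y1 y2) := by
  nth_rw 2 [← Real.div_sqrt]
  rw [fiberMin]
  simp only [div_eq_mul_inv, mul_inv, inv_inv]
  ring

end Forms

section InvMulAddRpow

variable {c K p : ℝ}

lemma hasDerivAt_neg_inv_mul_add_rpow {s : ℝ} (hs : s ≠ 0) (hsK : 0 < s + K) :
    HasDerivAt (fun t => -(t * (t + K) ^ p)⁻¹)
      ((s ^ 2 * (s + K) ^ p)⁻¹ + p * (s * (s + K) ^ (p + 1))⁻¹) s := by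
  have hpow : (s + K) ^ p ≠ 0 := (Real.rpow_pos_of_pos hsK p).ne'
  have hderiv := (((hasDerivAt_id s).mul
    (((hasDerivAt_id s).add_const K).rpow_const (p := p) (.inl hsK.ne'))).inv
      (mul_ne_zero hs hpow)).neg
  refine hderiv.congr_deriv ?_
  simp only [id, Pi.mul_apply, Real.rpow_sub_one hsK.ne', Real.rpow_add_one hsK.ne']
  field_simp

lemma tendsto_mul_add_rpow_atTop (hp : 0 ≤ p) :
    Tendsto (fun s : ℝ => s * (s + K) ^ p) atTop atTop := by
  refine tendsto_atTop_mono' atTop ?_ tendsto_id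
  filter_upwards [eventually_ge_atTop 0, eventually_ge_atTop (1 - K)] with s hs hsK
  exact le_mul_of_one_le_right hs (Real.one_le_rpow (by linarith) hp)

lemma tendsto_neg_inv_mul_add_rpow_atTop (hp : 0 ≤ p) :
    Tendsto (fun s : ℝ => -(s * (s + K) ^ p)⁻¹) atTop (𝓝 0) := by
  simpa only [Pi.inv_apply, neg_zero] using (tendsto_mul_add_rpow_atTop hp).inv_tendsto_atTop.neg

lemma integrableOn_deriv_neg_inv_mul_add_rpow (hc : 0 < c) (hcK : 0 < c + K) (hp : 0 ≤ p) :
    IntegrableOn (fun s => (s ^ 2 * (s + K) ^ p)⁻¹ + p * (s * (s + K) ^ (p + 1))⁻¹) (Ioi c) := by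
  refine integrableOn_Ioi_deriv_of_nonneg' (fun s hs => ?_) (fun s hs => ?_)
    (tendsto_neg_inv_mul_add_rpow_atTop (K := K) hp)
  · have hcs : c ≤ s := hs
    exact hasDerivAt_neg_inv_mul_add_rpow (by linarith) (by linarith)
  · have hcs : c < s := hs
    have hs0 : 0 < s := by linarith
    have hsK : 0 < s + K := by linarith
    positivity

lemma integrableOn_inv_sq_mul_add_rpow (hc : 0 < c) (hcK : 0 < c + K) (hp : 0 ≤ p) :
    IntegrableOn (fun s => (s ^ 2 * (s + K) ^ p)⁻¹) (Ioi c) := by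
  refine (integrableOn_deriv_neg_inv_mul_add_rpow hc hcK hp).mono' (by fun_prop) ?_
  filter_upwards [ae_restrict_mem measurableSet_Ioi] with s (hcs : c < s)
  have hs0 : 0 < s := by linarith
  have hsK : 0 < s + K := by linarith
  rw [Real.norm_of_nonneg (by positivity)]
  exact le_add_of_nonneg_right (by positivity)

lemma integrableOn_inv_mul_add_rpow_add_one (hc : 0 < c) (hcK : 0 < c + K) (hp : 0 < p) :
    IntegrableOn (fun s => (s * (s + K) ^ (p + 1))⁻¹) (Ioi c) := by
  have hdiff := (integrableOn_deriv_neg_inv_mul_add_rpow hc hcK hp.le).sub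
    (integrableOn_inv_sq_mul_add_rpow hc hcK hp.le)
  refine (integrable_const_mul_iff hp.ne'.isUnit _).1 (hdiff.congr (ae_of_all _ fun s => ?_))
  exact add_sub_cancel_left _ _

lemma integral_inv_sq_mul_add_rpow (hc : 0 < c) (hcK : 0 < c + K) (hp : 0 ≤ p) :
    ∫ s in Ioi c, (s ^ 2 * (s + K) ^ p)⁻¹
      = -p * (∫ s in Ioi c, (s * (s + K) ^ (p + 1))⁻¹) + (c * (c + K) ^ p)⁻¹ := by
  have hsum := integral_Ioi_of_hasDerivAt_of_tendsto'
    (fun s (hcs : c ≤ s) => hasDerivAt_neg_inv_mul_add_rpow (p := p) (by linarith) (by linarith))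
    (integrableOn_deriv_neg_inv_mul_add_rpow hc hcK hp) (tendsto_neg_inv_mul_add_rpow_atTop hp)
  have hsecond : IntegrableOn (fun s => p * (s * (s + K) ^ (p + 1))⁻¹) (Ioi c) := by
    rcases hp.eq_or_lt with rfl | hp
    · simp only [zero_mul, integrableOn_zero]
    · exact (integrableOn_inv_mul_add_rpow_add_one hc hcK hp).const_mul p
  rw [integral_add (integrableOn_inv_sq_mul_add_rpow hc hcK hp) hsecond,
    integral_const_mul] at hsum
  linarith

end InvMulAddRpow

lemma integral_inv_Qw_sq_mul_add_rpow {a11 a22 : ℝ} {a12 : ℂ} {y1 y2 K p : ℝ} (ha : 0 < a11)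
    (hD : 0 < reDet a11 a22 a12) (hc : 0 < fiberMin a11 a22 a12 y1 y2)
    (hcK : 0 < fiberMin a11 a22 a12 y1 y2 + K) (hp : 0 ≤ p) :
    ∫ x, (Qw a11 a22 a12 y1 y2 x ^ 2 * (Qw a11 a22 a12 y1 y2 x + K) ^ p)⁻¹
      = -p * (∫ x, (Qw a11 a22 a12 y1 y2 x * (Qw a11 a22 a12 y1 y2 x + K) ^ (p + 1))⁻¹)
        + Real.pi * √(reDet a11 a22 a12) / (hermDet a11 a22 a12 *
          (fiberMin a11 a22 a12 y1 y2 + K) ^ p * QR a11 a22 a12 y1 y2) := by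
  rw [integral_comp_Qw ha hD (F := fun s => (s ^ 2 * (s + K) ^ p)⁻¹) (by fun_prop),
    integral_comp_Qw ha hD (F := fun s => (s * (s + K) ^ (p + 1))⁻¹) (by fun_prop),
    integral_inv_sq_mul_add_rpow hc hcK hp, mul_add, mul_left_comm, pi_div_sqrt_reDet_mul_inv]

/-- the closed forms of the auxiliary integrals `I₀₁`, `I₀₂`, `I₀₃`:
with `c = (A/𝔸)Qℝ(y)` and `ϱ = √(c + Aμ²)`,
`I₀₁ = (π/√𝔸)∫_c^∞ ds/(s(s+Aμ²)^{3/2})`, `I₀₂ = −I₀₁/2 + π√𝔸/(Aϱ·Qℝ(y))`,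
`I₀₃ = π√𝔸/(A·Qℝ(y))`. -/
theorem statement15 (a11 a22 : ℝ) (a12 : ℂ) (ha11 : 0 < a11) (ha22 : 0 < a22)
    (hA : 0 < a11 * a22 - Complex.normSq a12) (y1 y2 μ : ℝ) (hy : ¬(y1 = 0 ∧ y2 = 0)) :
    (Integrable (fun x : ℝ × ℝ => (Qw a11 a22 a12 y1 y2 x *
        (Qw a11 a22 a12 y1 y2 x + (a11 * a22 - Complex.normSq a12) * μ ^ 2)
          ^ ((3 : ℝ) / 2))⁻¹) ∧
      IntegrableOn (fun s : ℝ =>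
          (s * (s + (a11 * a22 - Complex.normSq a12) * μ ^ 2) ^ ((3 : ℝ) / 2))⁻¹)
        (Set.Ioi (((a11 * a22 - Complex.normSq a12) /
          (a11 * a22 - Complex.normSq a12 + a12.im ^ 2)) * QR a11 a22 a12 y1 y2)) ∧
      (∫ x : ℝ × ℝ, (Qw a11 a22 a12 y1 y2 x *
        (Qw a11 a22 a12 y1 y2 x + (a11 * a22 - Complex.normSq a12) * μ ^ 2)
          ^ ((3 : ℝ) / 2))⁻¹)
        = (Real.pi / Real.sqrt (a11 * a22 - Complex.normSq a12 + a12.im ^ 2)) *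
          ∫ s in Set.Ioi (((a11 * a22 - Complex.normSq a12) /
              (a11 * a22 - Complex.normSq a12 + a12.im ^ 2)) * QR a11 a22 a12 y1 y2),
            (s * (s + (a11 * a22 - Complex.normSq a12) * μ ^ 2) ^ ((3 : ℝ) / 2))⁻¹) ∧
    (Integrable (fun x : ℝ × ℝ => (Qw a11 a22 a12 y1 y2 x ^ 2 *
        (Qw a11 a22 a12 y1 y2 x + (a11 * a22 - Complex.normSq a12) * μ ^ 2)
          ^ ((1 : ℝ) / 2))⁻¹) ∧
      (∫ x : ℝ × ℝ, (Qw a11 a22 a12 y1 y2 x ^ 2 *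
        (Qw a11 a22 a12 y1 y2 x + (a11 * a22 - Complex.normSq a12) * μ ^ 2)
          ^ ((1 : ℝ) / 2))⁻¹)
        = -(1 / 2) * (∫ x : ℝ × ℝ, (Qw a11 a22 a12 y1 y2 x *
            (Qw a11 a22 a12 y1 y2 x + (a11 * a22 - Complex.normSq a12) * μ ^ 2)
              ^ ((3 : ℝ) / 2))⁻¹)
          + Real.pi * Real.sqrt (a11 * a22 - Complex.normSq a12 + a12.im ^ 2) /
            ((a11 * a22 - Complex.normSq a12) *
              Real.sqrt (((a11 * a22 - Complex.normSq a12) /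
                  (a11 * a22 - Complex.normSq a12 + a12.im ^ 2)) * QR a11 a22 a12 y1 y2
                + (a11 * a22 - Complex.normSq a12) * μ ^ 2) *
              QR a11 a22 a12 y1 y2)) ∧
    (Integrable (fun x : ℝ × ℝ => (Qw a11 a22 a12 y1 y2 x ^ 2)⁻¹) ∧
      (∫ x : ℝ × ℝ, (Qw a11 a22 a12 y1 y2 x ^ 2)⁻¹)
        = Real.pi * Real.sqrt (a11 * a22 - Complex.normSq a12 + a12.im ^ 2) /
            ((a11 * a22 - Complex.normSq a12) * QR a11 a22 a12 y1 y2)) := by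
  have hD : 0 < reDet a11 a22 a12 := reDet_pos hA
  have hc : 0 < fiberMin a11 a22 a12 y1 y2 := mul_pos (div_pos hA hD) (QR_pos ha11 hD hy)
  have hc₀ : 0 < fiberMin a11 a22 a12 y1 y2 + 0 := by rwa [add_zero]
  have hcK : 0 < fiberMin a11 a22 a12 y1 y2 + hermDet a11 a22 a12 * μ ^ 2 :=
    add_pos_of_pos_of_nonneg hc (mul_nonneg hA.le (sq_nonneg μ))
  have hint₁ := integrableOn_inv_mul_add_rpow_add_one hc hcK one_half_pos
  have hint₂ := integrableOn_inv_sq_mul_add_rpow hc hcK one_half_pos.le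
  have hint₃ := integrableOn_inv_sq_mul_add_rpow hc hc₀ le_rfl
  have hI₂ := integral_inv_Qw_sq_mul_add_rpow ha11 hD hc hcK one_half_pos.le
  have hI₃ := integral_inv_Qw_sq_mul_add_rpow ha11 hD hc hc₀ le_rfl
  rw [show (1 / 2 + 1 : ℝ) = 3 / 2 by norm_num] at hint₁ hI₂
  rw [← Real.sqrt_eq_rpow (_ + _)] at hI₂
  simp only [Real.rpow_zero, mul_one, neg_zero, zero_mul, zero_add] at hint₃ hI₃
  exact ⟨⟨integrable_comp_Qw ha11 hD hint₁, hint₁,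
      integral_comp_Qw ha11 hD hint₁.aestronglyMeasurable⟩,
    ⟨integrable_comp_Qw ha11 hD hint₂, hI₂⟩, ⟨integrable_comp_Qw ha11 hD hint₃, hI₃⟩⟩
end

section
/- For every C₀ ≥ 1 there are constants c > 0 and C > 0 with the following property (leading asymptote of the Green integral of a codimension-3 graphical submanifold of ℝ⁵). Let f₃, f₄, f₅ : ℝ² → ℝ be twice continuously differentiable on the closed unit ball with |fᵢ|, |Dfᵢ|, |D²fᵢ| ≤ C₀ there, let h(σ) = (σ₁, σ₂, f₃(σ), f₄(σ), f₅(σ)), and let f : ℝ² → ℝ satisfy |f|, |Df|, |D²f| ≤ C₀ on the closed unit ball. Fix σ₀ ∈ ℝ² with |σ₀| ≤ 1/2 and mutually orthonormal vectors n₁, n₂, n₃ ∈ ℝ⁵ each orthogonal to ∂₁h(σ₀) and ∂₂h(σ₀). Then for every t = (t₁, t₂, t₃) ∈ ℝ³ with 0 < |t| ≤ c, setting s = h(σ₀) + t₁n₁ + t₂n₂ + t₃n₃, the integral I_{Γ,f}(s) = −(1/(8π²)) ∫_{|σ|<1} f(σ)·|s − h(σ)|^{−3}·√(det G(σ)) dσ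 converges, where G(σ) is the 2×2 Gram matrix with entries ⟨∂ᵢh(σ), ∂ⱼh(σ)⟩, and | I_{Γ,f}(s) + f(σ₀)/(4π|t|) | ≤ C. -/
open MeasureTheory
open scoped RealInnerProductSpace

/-- The graph map `h(σ) = (σ₁, σ₂, f₃(σ), f₄(σ), f₅(σ)) ∈ ℝ⁵`. -/
noncomputable def graphMap (f3 f4 f5 : EuclideanSpace ℝ (Fin 2) → ℝ)
    (σ : EuclideanSpace ℝ (Fin 2)) : EuclideanSpace ℝ (Fin 5) :=
  (WithLp.equiv 2 (Fin 5 → ℝ)).symm ![σ 0, σ 1, f3 σ, f4 σ, f5 σ]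

/-- The determinant of the 2×2 Gram matrix `G(σ)` of the tangent vectors `∂ᵢh(σ)`. -/
noncomputable def gramDet (f3 f4 f5 : EuclideanSpace ℝ (Fin 2) → ℝ)
    (σ : EuclideanSpace ℝ (Fin 2)) : ℝ :=
  ⟪fderiv ℝ (graphMap f3 f4 f5) σ (EuclideanSpace.single 0 1),
      fderiv ℝ (graphMap f3 f4 f5) σ (EuclideanSpace.single 0 1)⟫ *
    ⟪fderiv ℝ (graphMap f3 f4 f5) σ (EuclideanSpace.single 1 1),
      fderiv ℝ (graphMap f3 f4 f5) σ (EuclideanSpace.single 1 1)⟫ -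
  ⟪fderiv ℝ (graphMap f3 f4 f5) σ (EuclideanSpace.single 0 1),
      fderiv ℝ (graphMap f3 f4 f5) σ (EuclideanSpace.single 1 1)⟫ ^ 2

/-!
The kernel `|s - h σ|⁻³` is compared with that of a flat surface. Freezing the derivative of `h` at
`σ₀` in the parameter `σ` would leave an error of relative size `|σ - σ₀|`, whose integral diverges
logarithmically as `T = |s - h σ₀| → 0`. Instead the surface is parametrized near `h σ₀` by its
nonlinear tangential coordinate `y`, the projection of `h σ - h σ₀` to the tangent plane. Then
`h σ - h σ₀` differs from `y` only by a normal vector of size `O(|y|²)`, so that `|s - h σ|²` is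
`T² + |y|² + O(T |y|² + |y|⁴)`, the area element is `(1 + O(|y|²)) dy`, and `f` is affine in `y` up
to `O(|y|²)`. All these errors are integrable against the kernel uniformly in `T`. In the remaining
flat integral the linear part of `f` vanishes by oddness, and over the disc of radius `ρ` the
constant part gives `2π f(σ₀) (1 / T - 1 / √(T² + ρ²))`. The rest of the surface stays at a distance
bounded below from `s`.
-/

local notation "ℝ²" => EuclideanSpace ℝ (Fin 2)

section FlatModel

/-- The distance between two points of a Euclidean space whose components in two complementary
orthogonal directions differ by `T` and `r`. With `r = ‖y‖` it is the flat model of `‖s - h σ‖`,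
where `T` is the distance from `s` to the surface and `y` the tangential displacement. -/
noncomputable def flatDist (T r : ℝ) : ℝ := √(T ^ 2 + r ^ 2)

/-- The error profile `T / d ^ 3 + 1 / d` with `d = flatDist T r`: the correction that curvature
makes to `1 / d ^ 3`, whose integral over a disc stays bounded as `T → 0`. -/
noncomputable def flatError (T r : ℝ) : ℝ := T * (flatDist T r ^ 3)⁻¹ + (flatDist T r)⁻¹

variable {T r ρ : ℝ}

lemma sq_flatDist : flatDist T r ^ 2 = T ^ 2 + r ^ 2 :=
  Real.sq_sqrt (by positivity)

lemma flatDist_pos (hT : 0 < T) : 0 < flatDist T r :=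
  Real.sqrt_pos.2 (by positivity)

lemma le_flatDist_left : T ≤ flatDist T r :=
  Real.le_sqrt_of_sq_le (by linarith [sq_nonneg r])

lemma le_flatDist_right : r ≤ flatDist T r :=
  Real.le_sqrt_of_sq_le (by linarith [sq_nonneg T])

lemma flatDist_le_add (hT : 0 ≤ T) (hr : 0 ≤ r) : flatDist T r ≤ T + r :=
  Real.sqrt_le_iff.2 ⟨by positivity, by nlinarith⟩

lemma flatDist_zero_right (hT : 0 ≤ T) : flatDist T 0 = T := by
  simp [flatDist, Real.sqrt_sq hT]

lemma hasDerivAt_flatDist (hT : 0 < T) : HasDerivAt (flatDist T) (r * (flatDist T r)⁻¹) r := by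
  have h : HasDerivAt (fun r : ℝ => T ^ 2 + r ^ 2) (2 * r) r := by
    simpa using (hasDerivAt_pow 2 r).const_add (T ^ 2)
  refine (h.sqrt (by positivity)).congr_deriv ?_
  rw [flatDist]
  field_simp

lemma continuous_inv_flatDist_pow (hT : 0 < T) (n : ℕ) :
    Continuous fun r => (flatDist T r ^ n)⁻¹ := by
  refine Continuous.inv₀ (Continuous.pow ?_ n) fun r => (pow_pos (flatDist_pos hT) n).ne'
  exact continuous_iff_continuousAt.2 fun r => (hasDerivAt_flatDist hT).continuousAt

lemma continuous_inv_flatDist (hT : 0 < T) : Continuous fun r => (flatDist T r)⁻¹ := by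
  simpa only [pow_one] using continuous_inv_flatDist_pow hT 1

lemma continuous_flatError (hT : 0 < T) : Continuous (flatError T) :=
  (continuous_const.mul (continuous_inv_flatDist_pow hT 3)).add (continuous_inv_flatDist hT)

lemma flatError_nonneg (hT : 0 < T) : 0 ≤ flatError T r := by
  have := flatDist_pos (r := r) hT
  unfold flatError
  positivity

lemma sq_mul_inv_flatDist_pow_three_le (hT : 0 < T) :
    r ^ 2 * (flatDist T r ^ 3)⁻¹ ≤ flatError T r := by
  have hd := flatDist_pos (r := r) hT
  have hsq : r ^ 2 ≤ flatDist T r ^ 2 := sq_flatDist ▸ le_add_of_nonneg_left (sq_nonneg T)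
  calc r ^ 2 * (flatDist T r ^ 3)⁻¹
      ≤ flatDist T r ^ 2 * (flatDist T r ^ 3)⁻¹ := by gcongr ?_ * _
    _ = (flatDist T r)⁻¹ := by field_simp
    _ ≤ flatError T r := le_add_of_nonneg_left (by positivity)

lemma integral_mul_inv_flatDist_pow_three (hT : 0 < T) :
    ∫ r in (0 : ℝ)..ρ, r * (flatDist T r ^ 3)⁻¹ = 1 / T - 1 / flatDist T ρ := by
  have hderiv (r : ℝ) :
      HasDerivAt (fun r => -(flatDist T r)⁻¹) (r * (flatDist T r ^ 3)⁻¹) r := by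
    have hd := flatDist_pos (r := r) hT
    refine ((hasDerivAt_flatDist hT).inv hd.ne').neg.congr_deriv ?_
    field_simp
  rw [intervalIntegral.integral_eq_sub_of_hasDerivAt (fun r _ => hderiv r)
    ((continuous_id.mul (continuous_inv_flatDist_pow hT 3)).intervalIntegrable _ _),
    flatDist_zero_right hT.le]
  ring

lemma integral_mul_inv_flatDist (hT : 0 < T) :
    ∫ r in (0 : ℝ)..ρ, r * (flatDist T r)⁻¹ = flatDist T ρ - T := by
  rw [intervalIntegral.integral_eq_sub_of_hasDerivAt (fun r _ => hasDerivAt_flatDist hT)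
    ((continuous_id.mul (continuous_inv_flatDist hT)).intervalIntegrable _ _),
    flatDist_zero_right hT.le]

lemma volume_real_ball_one (x : ℝ²) : volume.real (Metric.ball x 1) = Real.pi := by
  simp [Measure.real, EuclideanSpace.volume_ball_fin_two, Real.pi_nonneg]

lemma setIntegral_ball_fun_norm (g : ℝ → ℝ) (hρ : 0 ≤ ρ) :
    ∫ y in Metric.ball (0 : ℝ²) ρ, g ‖y‖ = 2 * Real.pi * ∫ r in (0 : ℝ)..ρ, r * g r := by
  have hball : ∫ y in Metric.ball (0 : ℝ²) ρ, g ‖y‖ = ∫ y : ℝ², (Set.Iio ρ).indicator g ‖y‖ := by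
    rw [← integral_indicator measurableSet_ball]
    congr with y
    simp only [Set.indicator, mem_ball_zero_iff, Set.mem_Iio]
  have hind (r : ℝ) : r ^ (2 - 1) • (Set.Iio ρ).indicator g r =
      (Set.Iio ρ).indicator (fun r => r * g r) r := by
    simp [Set.indicator]
  rw [hball, integral_fun_norm_addHaar volume ((Set.Iio ρ).indicator g), volume_real_ball_one,
    finrank_euclideanSpace_fin]
  simp_rw [hind]
  rw [setIntegral_indicator measurableSet_Iio, Set.Ioi_inter_Iio,
    intervalIntegral.integral_of_le hρ, integral_Ioc_eq_integral_Ioo]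
  simp only [nsmul_eq_mul, smul_eq_mul, Nat.cast_ofNat, mul_assoc]

lemma setIntegral_ball_inv_flatDist_pow_three (hT : 0 < T) (hρ : 0 ≤ ρ) :
    ∫ y in Metric.ball (0 : ℝ²) ρ, (flatDist T ‖y‖ ^ 3)⁻¹
      = 2 * Real.pi * (1 / T - 1 / flatDist T ρ) := by
  rw [setIntegral_ball_fun_norm (fun r => (flatDist T r ^ 3)⁻¹) hρ,
    integral_mul_inv_flatDist_pow_three hT]

lemma setIntegral_ball_inv_flatDist (hT : 0 < T) (hρ : 0 ≤ ρ) :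
    ∫ y in Metric.ball (0 : ℝ²) ρ, (flatDist T ‖y‖)⁻¹ = 2 * Real.pi * (flatDist T ρ - T) := by
  rw [setIntegral_ball_fun_norm (fun r => (flatDist T r)⁻¹) hρ, integral_mul_inv_flatDist hT]

lemma setIntegral_ball_eq_zero_of_odd {E : Type*} [SeminormedAddCommGroup E] [MeasurableSpace E]
    [BorelSpace E] {μ : Measure E} [μ.IsNegInvariant] {g : E → ℝ} (hg : ∀ y, g (-y) = -g y) :
    ∫ y in Metric.ball 0 ρ, g y ∂μ = 0 := by
  have hodd (y : E) : (Metric.ball 0 ρ).indicator g (-y) = -(Metric.ball 0 ρ).indicator g y := by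
    by_cases hy : ‖y‖ < ρ <;> simp [Set.indicator, hy, hg]
  have hneg := integral_neg_eq_self ((Metric.ball 0 ρ).indicator g) μ
  simp_rw [hodd, integral_neg] at hneg
  rw [← integral_indicator measurableSet_ball]
  linarith

lemma integrableOn_ball_of_continuous {E F : Type*} [MetricSpace E] [ProperSpace E]
    [MeasurableSpace E] [OpensMeasurableSpace E] {μ : Measure E} [IsFiniteMeasureOnCompacts μ]
    [NormedAddCommGroup F] {g : E → F} {x : E} (hg : Continuous g) :
    IntegrableOn g (Metric.ball x ρ) μ :=
  (hg.continuousOn.integrableOn_compact (isCompact_closedBall x ρ)).mono_set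
    Metric.ball_subset_closedBall

lemma continuous_affine_mul_inv_flatDist_pow_three (hT : 0 < T) (a : ℝ) (l : ℝ² →L[ℝ] ℝ) :
    Continuous fun y => (a + l y) * (flatDist T ‖y‖ ^ 3)⁻¹ :=
  (continuous_const.add l.continuous).mul ((continuous_inv_flatDist_pow hT 3).comp continuous_norm)

lemma setIntegral_ball_flatError_le (hT : 0 < T) (hρ : 0 ≤ ρ) :
    ∫ y in Metric.ball (0 : ℝ²) ρ, flatError T ‖y‖ ≤ 2 * Real.pi * (1 + ρ) := by
  have hd := flatDist_pos (r := ρ) hT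
  have hint3 := integrableOn_ball_of_continuous (μ := volume) (x := (0 : ℝ²)) (ρ := ρ)
    (((continuous_inv_flatDist_pow hT 3).comp continuous_norm).const_mul T)
  have hint1 := integrableOn_ball_of_continuous (μ := volume) (x := (0 : ℝ²)) (ρ := ρ)
    ((continuous_inv_flatDist hT).comp continuous_norm)
  calc ∫ y in Metric.ball (0 : ℝ²) ρ, flatError T ‖y‖
      = T * (2 * Real.pi * (1 / T - 1 / flatDist T ρ)) + 2 * Real.pi * (flatDist T ρ - T) := by
        rw [← setIntegral_ball_inv_flatDist_pow_three hT hρ, ← setIntegral_ball_inv_flatDist hT hρ,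
          ← integral_const_mul]
        exact integral_add hint3 hint1
    _ = 2 * Real.pi * (1 - T / flatDist T ρ + (flatDist T ρ - T)) := by field_simp
    _ ≤ 2 * Real.pi * (1 + ρ) := by
        have := flatDist_le_add hT.le hρ
        have : 0 ≤ T / flatDist T ρ := by positivity
        gcongr <;> linarith

lemma abs_setIntegral_ball_affine_sub_le (hT : 0 < T) (hρ : 0 < ρ) (a : ℝ) (l : ℝ² →L[ℝ] ℝ) :
    |(∫ y in Metric.ball (0 : ℝ²) ρ, (a + l y) * (flatDist T ‖y‖ ^ 3)⁻¹) - 2 * Real.pi * a / T|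
      ≤ 2 * Real.pi * |a| / ρ := by
  have hd := flatDist_pos (r := ρ) hT
  have hlinear : ∫ y in Metric.ball (0 : ℝ²) ρ, l y * (flatDist T ‖y‖ ^ 3)⁻¹ = 0 :=
    setIntegral_ball_eq_zero_of_odd fun y => by simp only [map_neg, norm_neg, neg_mul]
  have hcont : Continuous fun y : ℝ² => (flatDist T ‖y‖ ^ 3)⁻¹ :=
    (continuous_inv_flatDist_pow hT 3).comp continuous_norm
  have hcontl : Continuous fun y => l y * (flatDist T ‖y‖ ^ 3)⁻¹ := l.continuous.mul hcont
  have heval : ∫ y in Metric.ball (0 : ℝ²) ρ, (a + l y) * (flatDist T ‖y‖ ^ 3)⁻¹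
      = a * (2 * Real.pi * (1 / T - 1 / flatDist T ρ)) := by
    simp_rw [add_mul]
    rw [integral_add (integrableOn_ball_of_continuous (hcont.const_mul a))
      (integrableOn_ball_of_continuous hcontl), hlinear, add_zero,
      integral_const_mul, setIntegral_ball_inv_flatDist_pow_three hT hρ.le]
  calc _ = |-(2 * Real.pi * a / flatDist T ρ)| := by rw [heval]; congr 1; ring
    _ = 2 * Real.pi * |a| / flatDist T ρ := by
        rw [abs_neg, abs_div, abs_mul, abs_of_pos hd, abs_of_pos Real.two_pi_pos]
    _ ≤ 2 * Real.pi * |a| / ρ := by gcongr; exact le_flatDist_right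

end FlatModel

section ChangeOfVariables

variable {E : Type*} [NormedAddCommGroup E] [NormedSpace ℝ E] [FiniteDimensional ℝ E]
  [MeasurableSpace E] [BorelSpace E] {μ : Measure E} [μ.IsAddHaarMeasure]

lemma abs_setIntegral_sub_setIntegral_image_le {U : Set E} (hU : MeasurableSet U) {ψ : E → E}
    {ψ' : E → E →L[ℝ] E} (hψ : ∀ x ∈ U, HasFDerivWithinAt ψ (ψ' x) U x) (hinj : Set.InjOn ψ U)
    {F m e : E → ℝ} (hF : IntegrableOn F U μ) (hm : IntegrableOn m (ψ '' U) μ)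
    (he : IntegrableOn e (ψ '' U) μ)
    (hle : ∀ x ∈ U, |F x - |(ψ' x).det| * m (ψ x)| ≤ |(ψ' x).det| * e (ψ x)) :
    |(∫ x in U, F x ∂μ) - ∫ y in ψ '' U, m y ∂μ| ≤ ∫ y in ψ '' U, e y ∂μ := by
  rw [integrableOn_image_iff_integrableOn_abs_det_fderiv_smul μ hU hψ hinj] at hm he
  rw [integral_image_eq_integral_abs_det_fderiv_smul μ hU hψ hinj m,
    integral_image_eq_integral_abs_det_fderiv_smul μ hU hψ hinj e, ← integral_sub hF hm]
  exact norm_integral_le_of_norm_le (G := ℝ) he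
    (ae_restrict_of_forall_mem hU fun x hx => hle x hx)

end ChangeOfVariables

section C11

variable {E F : Type*} [NormedAddCommGroup E] [NormedSpace ℝ E] [NormedAddCommGroup F]
  [NormedSpace ℝ F] {K K' r : ℝ} {g g' : E → F} {s : Set E} {x y z : E}

/-- `g` is of class `C^{1,1}` on `s` with constant `K`: it is differentiable with derivative
bounded by `K` and `K`-Lipschitz. This is all that is used of the bounds on a `C²` function. -/
structure IsC11On (K : ℝ) (g : E → F) (s : Set E) : Prop where
  differentiableAt : ∀ x ∈ s, DifferentiableAt ℝ g x
  norm_fderiv_le : ∀ x ∈ s, ‖fderiv ℝ g x‖ ≤ K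
  norm_fderiv_sub_le : ∀ x ∈ s, ∀ y ∈ s, ‖fderiv ℝ g x - fderiv ℝ g y‖ ≤ K * ‖x - y‖

namespace IsC11On

lemma continuousOn (hg : IsC11On K g s) : ContinuousOn g s :=
  fun x hx => (hg.differentiableAt x hx).continuousAt.continuousWithinAt

lemma continuousOn_fderiv (hg : IsC11On K g s) : ContinuousOn (fderiv ℝ g) s :=
  (LipschitzOnWith.of_dist_le' fun x hx y hy => by
    simpa only [dist_eq_norm] using hg.norm_fderiv_sub_le x hx y hy).continuousOn

lemma of_clm {L : E →L[ℝ] F} (hL : ‖L‖ ≤ K) : IsC11On K L s where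
  differentiableAt _ _ := L.differentiableAt
  norm_fderiv_le _ _ := by rwa [L.fderiv]
  norm_fderiv_sub_le x _ y _ := by
    rw [L.fderiv, L.fderiv, sub_self, norm_zero]
    exact mul_nonneg ((norm_nonneg L).trans hL) (norm_nonneg _)

lemma mono (hg : IsC11On K g s) (hK : K ≤ K') : IsC11On K' g s where
  differentiableAt := hg.differentiableAt
  norm_fderiv_le x hx := (hg.norm_fderiv_le x hx).trans hK
  norm_fderiv_sub_le x hx y hy := (hg.norm_fderiv_sub_le x hx y hy).trans (by gcongr)

lemma add (hg : IsC11On K g s) (hg' : IsC11On K' g' s) : IsC11On (K + K') (g + g') s where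
  differentiableAt x hx := (hg.differentiableAt x hx).add (hg'.differentiableAt x hx)
  norm_fderiv_le x hx := by
    rw [fderiv_add (hg.differentiableAt x hx) (hg'.differentiableAt x hx)]
    exact norm_add_le_of_le (hg.norm_fderiv_le x hx) (hg'.norm_fderiv_le x hx)
  norm_fderiv_sub_le x hx y hy := by
    rw [fderiv_add (hg.differentiableAt x hx) (hg'.differentiableAt x hx),
      fderiv_add (hg.differentiableAt y hy) (hg'.differentiableAt y hy), add_sub_add_comm, add_mul]
    exact norm_add_le_of_le (hg.norm_fderiv_sub_le x hx y hy) (hg'.norm_fderiv_sub_le x hx y hy)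

lemma smul_const {f : E → ℝ} (hf : IsC11On K f s) (v : F) :
    IsC11On (K * ‖v‖) (fun x => f x • v) s where
  differentiableAt x hx := (hf.differentiableAt x hx).smul_const v
  norm_fderiv_le x hx := by
    rw [fderiv_smul_const (hf.differentiableAt x hx), ContinuousLinearMap.norm_smulRight_apply]
    gcongr
    exact hf.norm_fderiv_le x hx
  norm_fderiv_sub_le x hx y hy := by
    have hsub : (fderiv ℝ f x).smulRight v - (fderiv ℝ f y).smulRight v
        = (fderiv ℝ f x - fderiv ℝ f y).smulRight v := by
      ext u
      simp [sub_smul]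
    rw [fderiv_smul_const (hf.differentiableAt x hx), fderiv_smul_const (hf.differentiableAt y hy),
      hsub, ContinuousLinearMap.norm_smulRight_apply, mul_right_comm]
    gcongr
    exact hf.norm_fderiv_sub_le x hx y hy

lemma interior_of_contDiffOn (hs : Convex ℝ s) (hne : (interior s).Nonempty)
    (hg : ContDiffOn ℝ 2 g s)
    (hK : ∀ x ∈ s, ∀ k : ℕ, k ≤ 2 → ‖iteratedFDerivWithin ℝ k g s x‖ ≤ K) :
    IsC11On K g (interior s) := by
  have hu : UniqueDiffOn ℝ s := uniqueDiffOn_convex hs hne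
  have hfderiv (x) (hx : x ∈ interior s) : fderivWithin ℝ g s x = fderiv ℝ g x :=
    fderivWithin_of_mem_nhds (mem_interior_iff_mem_nhds.1 hx)
  refine ⟨fun x hx => ?_, fun x hx => ?_, fun x hx y hy => ?_⟩
  · exact (hg.contDiffAt (mem_interior_iff_mem_nhds.1 hx)).differentiableAt two_ne_zero
  · rw [← hfderiv x hx, ← norm_iteratedFDerivWithin_one g (hu x (interior_subset hx))]
    exact hK x (interior_subset hx) 1 one_le_two
  · rw [← hfderiv x hx, ← hfderiv y hy]
    refine hs.norm_image_sub_le_of_norm_fderivWithin_le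
      ((hg.fderivWithin hu (m := 1) le_rfl).differentiableOn one_ne_zero) (fun z hz => ?_)
      (interior_subset hy) (interior_subset hx)
    rw [← norm_iteratedFDerivWithin_one _ (hu z hz), norm_iteratedFDerivWithin_fderivWithin hu hz]
    exact hK z hz 2 le_rfl

lemma ball_of_contDiffOn (hg : ContDiffOn ℝ 2 g (Metric.closedBall z 1))
    (hK : ∀ x ∈ Metric.closedBall z 1, ∀ k : ℕ, k ≤ 2 →
      ‖iteratedFDerivWithin ℝ k g (Metric.closedBall z 1) x‖ ≤ K) :
    IsC11On K g (Metric.ball z 1) := by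
  rw [← interior_closedBall z one_ne_zero]
  refine interior_of_contDiffOn (convex_closedBall z 1) ⟨z, ?_⟩ hg hK
  exact Metric.ball_subset_interior_closedBall (Metric.mem_ball_self one_pos)

lemma norm_sub_sub_fderiv_le (hg : IsC11On K g s) (hK : 0 ≤ K) (hs : Convex ℝ s) (hz : z ∈ s)
    (hx : x ∈ s ∩ Metric.closedBall z r) (hy : y ∈ s ∩ Metric.closedBall z r) :
    ‖g x - g y - fderiv ℝ g z (x - y)‖ ≤ K * r * ‖x - y‖ := by
  refine (hs.inter (convex_closedBall z r)).norm_image_sub_le_of_norm_hasFDerivWithin_le'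
    (fun w hw => (hg.differentiableAt w hw.1).hasFDerivAt.hasFDerivWithinAt)
    (fun w hw => (hg.norm_fderiv_sub_le w hw.1 z hz).trans ?_) hy hx
  gcongr
  exact mem_closedBall_iff_norm.1 hw.2

lemma norm_sub_sub_fderiv_le_sq (hg : IsC11On K g s) (hK : 0 ≤ K) (hs : Convex ℝ s) (hz : z ∈ s)
    (hx : x ∈ s) : ‖g x - g z - fderiv ℝ g z (x - z)‖ ≤ K * ‖x - z‖ ^ 2 := by
  rw [pow_two, ← mul_assoc]
  exact hg.norm_sub_sub_fderiv_le hK hs hz ⟨hx, mem_closedBall_iff_norm.2 le_rfl⟩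
    ⟨hz, Metric.mem_closedBall_self (norm_nonneg _)⟩

end IsC11On

end C11

section TangentSplitting

variable {E V : Type*} [NormedAddCommGroup E] [InnerProductSpace ℝ E] [NormedAddCommGroup V]
  [InnerProductSpace ℝ V] {L : E →L[ℝ] V} {u : E} {v w ν : V}

/-- An orthogonal splitting of the ambient space `V` into the tangent space `range L` and its
complement. The tangential component is recorded in `E`, which is identified isometrically with
`range L` (in general not by `L` itself), so that it can serve as a chart. -/
structure TangentSplitting (L : E →L[ℝ] V) where
  tangential : V →L[ℝ] E
  normal : V →L[ℝ] V
  inner_eq : ∀ v w, ⟪v, w⟫ = ⟪tangential v, tangential w⟫ + ⟪normal v, normal w⟫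
  normal_apply : ∀ u, normal (L u) = 0
  tangential_eq_zero : ∀ ν, (∀ u, ⟪ν, L u⟫ = 0) → tangential ν = 0

namespace TangentSplitting

lemma nonempty_of_injective [FiniteDimensional ℝ E] (hL : Function.Injective L) :
    Nonempty (TangentSplitting L) := by
  let W := LinearMap.range (L : E →ₗ[ℝ] V)
  have hrank : Module.finrank ℝ W = Module.finrank ℝ E := LinearMap.finrank_range_of_inj hL
  let isom : W ≃ₗᵢ[ℝ] E :=
    (stdOrthonormalBasis ℝ W).equiv (stdOrthonormalBasis ℝ E) (finCongr hrank)
  refine ⟨⟨isom.toContinuousLinearEquiv.toContinuousLinearMap ∘L W.orthogonalProjectionOnto,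
    Wᗮ.starProjection, fun v w => ?_, fun u => ?_, fun ν hν => ?_⟩⟩
  · have hself (U : Submodule ℝ V) [U.HasOrthogonalProjection] :
        ⟪U.starProjection v, w⟫ = ⟪U.starProjection v, U.starProjection w⟫ := by
      rw [← U.inner_starProjection_left_eq_right,
        Submodule.starProjection_eq_self_iff.2 (U.starProjection_apply_mem v)]
    calc ⟪v, w⟫ = ⟪W.starProjection v, w⟫ + ⟪Wᗮ.starProjection v, w⟫ := by
          rw [← inner_add_left, W.starProjection_add_starProjection_orthogonal]
      _ = ⟪W.starProjection v, W.starProjection w⟫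
          + ⟪Wᗮ.starProjection v, Wᗮ.starProjection w⟫ := by rw [hself W, hself Wᗮ]
      _ = _ := congrArg (· + _) (isom.inner_map_map _ _).symm
  · rw [Submodule.starProjection_apply_eq_zero_iff, Submodule.orthogonal_orthogonal]
    exact LinearMap.mem_range_self _ u
  · have : W.orthogonalProjectionOnto ν = 0 := by
      rw [Submodule.orthogonalProjectionOnto_eq_zero_iff, Submodule.mem_orthogonal']
      rintro _ ⟨u, rfl⟩
      exact hν u
    simp [this]

variable (S : TangentSplitting L)

lemma norm_sq_eq (v : V) : ‖v‖ ^ 2 = ‖S.tangential v‖ ^ 2 + ‖S.normal v‖ ^ 2 := by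
  simpa only [real_inner_self_eq_norm_sq] using S.inner_eq v v

lemma norm_tangential_le (v : V) : ‖S.tangential v‖ ≤ ‖v‖ :=
  le_of_sq_le_sq (by linarith [S.norm_sq_eq v, sq_nonneg ‖S.normal v‖]) (norm_nonneg v)

lemma norm_normal_le (v : V) : ‖S.normal v‖ ≤ ‖v‖ :=
  le_of_sq_le_sq (by linarith [S.norm_sq_eq v, sq_nonneg ‖S.tangential v‖]) (norm_nonneg v)

lemma norm_normal_le_norm_sub (v : V) (u : E) : ‖S.normal v‖ ≤ ‖v - L u‖ := by
  simpa only [map_sub, S.normal_apply, sub_zero] using S.norm_normal_le (v - L u)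

lemma norm_normal_comp_le (H : E →L[ℝ] V) : ‖S.normal ∘L H‖ ≤ ‖H - L‖ :=
  ContinuousLinearMap.opNorm_le_bound _ (norm_nonneg _) fun u =>
    (S.norm_normal_le_norm_sub (H u) u).trans ((H - L).le_opNorm u)

lemma norm_tangential_apply (u : E) : ‖S.tangential (L u)‖ = ‖L u‖ := by
  rw [← sq_eq_sq₀ (norm_nonneg _) (norm_nonneg _), S.norm_sq_eq (L u), S.normal_apply]
  simp

lemma norm_normal_of_orthogonal (hν : ∀ u, ⟪ν, L u⟫ = 0) : ‖S.normal ν‖ = ‖ν‖ := by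
  rw [← sq_eq_sq₀ (norm_nonneg _) (norm_nonneg _), S.norm_sq_eq ν, S.tangential_eq_zero ν hν]
  simp

lemma norm_tangential_sub_of_orthogonal (hν : ∀ u, ⟪ν, L u⟫ = 0) (v : V) :
    ‖S.tangential (ν - v)‖ = ‖S.tangential v‖ := by
  rw [map_sub, S.tangential_eq_zero ν hν, zero_sub, norm_neg]

end TangentSplitting

end TangentSplitting

section AreaFactor

variable {V : Type*} [NormedAddCommGroup V] [InnerProductSpace ℝ V]

/-- The squared area of the parallelogram spanned by `v` and `w`. -/
noncomputable def sqArea (v w : V) : ℝ := ⟪v, v⟫ * ⟪w, w⟫ - ⟪v, w⟫ ^ 2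

/-- The factor by which a linear map of the plane into `V` multiplies area. For the derivative of a
parametrization this is the density `√(det G)` of the area element. -/
noncomputable def areaFactor (L : ℝ² →L[ℝ] V) : ℝ :=
  √(sqArea (L (EuclideanSpace.single 0 1)) (L (EuclideanSpace.single 1 1)))

lemma sqArea_nonneg (v w : V) : 0 ≤ sqArea v w := by
  rw [sqArea, sub_nonneg, pow_two]
  exact real_inner_mul_inner_self_le v w

lemma sqArea_le (v w : V) : sqArea v w ≤ ‖v‖ ^ 2 * ‖w‖ ^ 2 := by
  rw [sqArea, real_inner_self_eq_norm_sq, real_inner_self_eq_norm_sq]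
  exact sub_le_self _ (sq_nonneg _)

lemma abs_real_inner_le_sq {c : ℝ} {v w : V} (hv : ‖v‖ ≤ c) (hw : ‖w‖ ≤ c) : |⟪v, w⟫| ≤ c ^ 2 := by
  rw [pow_two]
  exact (abs_real_inner_le_norm v w).trans
    (mul_le_mul hv hw (norm_nonneg w) ((norm_nonneg v).trans hv))

lemma areaFactor_nonneg (L : ℝ² →L[ℝ] V) : 0 ≤ areaFactor L :=
  Real.sqrt_nonneg _

lemma sq_areaFactor (L : ℝ² →L[ℝ] V) : areaFactor L ^ 2 =
    sqArea (L (EuclideanSpace.single 0 1)) (L (EuclideanSpace.single 1 1)) :=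
  Real.sq_sqrt (sqArea_nonneg _ _)

lemma continuous_areaFactor : Continuous (areaFactor : (ℝ² →L[ℝ] V) → ℝ) := by
  unfold areaFactor sqArea
  fun_prop

lemma norm_apply_single_le {K : ℝ} {L : ℝ² →L[ℝ] V} (hL : ‖L‖ ≤ K) (i : Fin 2) :
    ‖L (EuclideanSpace.single i 1)‖ ≤ K := by
  simpa using L.le_of_opNorm_le hL (EuclideanSpace.single i 1)

lemma areaFactor_le {K : ℝ} {L : ℝ² →L[ℝ] V} (hL : ‖L‖ ≤ K) : areaFactor L ≤ K ^ 2 := by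
  refine Real.sqrt_le_iff.2 ⟨sq_nonneg K, (sqArea_le _ _).trans ?_⟩
  rw [pow_two (K ^ 2)]
  gcongr <;> exact norm_apply_single_le hL _

lemma areaFactor_eq_abs_det (A : ℝ² →L[ℝ] ℝ²) : areaFactor A = |A.det| := by
  have hdet : A.det = A (EuclideanSpace.single 0 1) 0 * A (EuclideanSpace.single 1 1) 1 -
      A (EuclideanSpace.single 0 1) 1 * A (EuclideanSpace.single 1 1) 0 := by
    rw [ContinuousLinearMap.det,
      ← LinearMap.det_toMatrix (EuclideanSpace.basisFun (Fin 2) ℝ).toBasis, Matrix.det_fin_two]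
    simp only [LinearMap.toMatrix_apply, OrthonormalBasis.coe_toBasis,
      EuclideanSpace.basisFun_apply, ContinuousLinearMap.coe_coe,
      OrthonormalBasis.coe_toBasis_repr_apply, EuclideanSpace.basisFun_repr]
    ring
  rw [areaFactor, ← Real.sqrt_sq_eq_abs, hdet, sqArea]
  simp only [PiLp.inner_apply, Fin.sum_univ_two, RCLike.inner_apply, conj_trivial]
  ring_nf

lemma sq_le_areaFactor {m : ℝ} {L : ℝ² →L[ℝ] V} (hm : 0 < m) (hL : ∀ u, m * ‖u‖ ≤ ‖L u‖) :
    m ^ 2 ≤ areaFactor L := by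
  set v := L (EuclideanSpace.single 0 1) with hv
  set w := L (EuclideanSpace.single 1 1) with hw
  have hsq (u : ℝ²) : m ^ 2 * ‖u‖ ^ 2 ≤ ‖L u‖ ^ 2 := by
    rw [← mul_pow]
    exact pow_le_pow_left₀ (by positivity) (hL u) 2
  have hw_sq : m ^ 2 ≤ ⟪w, w⟫ := by
    simpa [real_inner_self_eq_norm_sq] using hsq (EuclideanSpace.single 1 1)
  -- `z` is chosen so that `L z` is a multiple of the component of `v` orthogonal to `w`.
  let z : ℝ² := ⟪w, w⟫ • EuclideanSpace.single 0 1 - ⟪v, w⟫ • EuclideanSpace.single 1 1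
  have hz : ‖z‖ ^ 2 = ⟪w, w⟫ ^ 2 + ⟪v, w⟫ ^ 2 := by
    simp [z, EuclideanSpace.norm_sq_eq]
  have hLz : ‖L z‖ ^ 2 = ⟪w, w⟫ * sqArea v w := by
    rw [map_sub, map_smul, map_smul, ← real_inner_self_eq_norm_sq, inner_sub_sub_self]
    simp only [← hv, ← hw, real_inner_smul_left, real_inner_smul_right, real_inner_comm v w,
      sqArea]
    ring
  have harea : m ^ 2 * ⟪w, w⟫ ≤ sqArea v w := by
    refine le_of_mul_le_mul_left ?_ ((pow_pos hm 2).trans_le hw_sq)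
    nlinarith [hsq z, mul_nonneg (sq_nonneg m) (sq_nonneg ⟪v, w⟫)]
  refine Real.le_sqrt_of_sq_le (le_trans ?_ harea)
  rw [pow_two (m ^ 2)]
  gcongr

namespace TangentSplitting

variable {E : Type*} [NormedAddCommGroup E] [InnerProductSpace ℝ E] {L : E →L[ℝ] V}
  (S : TangentSplitting L)

lemma sqArea_tangential_le (v w : V) : sqArea (S.tangential v) (S.tangential w) ≤ sqArea v w := by
  have hcs : ⟪S.normal v, S.normal w⟫ * ⟪S.tangential v, S.tangential w⟫ ≤
      (‖S.normal v‖ * ‖S.normal w‖) * (‖S.tangential v‖ * ‖S.tangential w‖) :=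
    (le_abs_self _).trans <| (abs_mul _ _).trans_le <|
      mul_le_mul (abs_real_inner_le_norm _ _) (abs_real_inner_le_norm _ _) (abs_nonneg _)
        (by positivity)
  have hnormal := sqArea_nonneg (S.normal v) (S.normal w)
  simp only [sqArea, S.inner_eq v, S.inner_eq w w, real_inner_self_eq_norm_sq] at hnormal ⊢
  nlinarith [sq_nonneg (‖S.tangential v‖ * ‖S.normal w‖ - ‖S.normal v‖ * ‖S.tangential w‖)]

lemma sqArea_le_sqArea_tangential_add {K ε : ℝ} {v w : V} (hv : ‖v‖ ≤ K) (hw : ‖w‖ ≤ K)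
    (hnv : ‖S.normal v‖ ≤ ε) (hnw : ‖S.normal w‖ ≤ ε) :
    sqArea v w ≤ sqArea (S.tangential v) (S.tangential w) + 4 * K ^ 2 * ε ^ 2 := by
  have hsplit : sqArea v w = sqArea (S.tangential v) (S.tangential w) + (‖v‖ ^ 2 * ‖S.normal w‖ ^ 2
      + ‖S.normal v‖ ^ 2 * ‖S.tangential w‖ ^ 2
      - ⟪S.normal v, S.normal w⟫ * (⟪v, w⟫ + ⟪S.tangential v, S.tangential w⟫)) := by
    simp only [sqArea, real_inner_self_eq_norm_sq, S.norm_sq_eq v, S.norm_sq_eq w, S.inner_eq v]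
    ring
  have htv := (S.norm_tangential_le v).trans hv
  have htw := (S.norm_tangential_le w).trans hw
  have hcross : -(⟪S.normal v, S.normal w⟫ * (⟪v, w⟫ + ⟪S.tangential v, S.tangential w⟫)) ≤
      ε ^ 2 * (K ^ 2 + K ^ 2) := by
    refine (neg_le_abs _).trans ((abs_mul _ _).trans_le ?_)
    exact mul_le_mul (abs_real_inner_le_sq hnv hnw)
      ((abs_add_le _ _).trans (add_le_add (abs_real_inner_le_sq hv hw)
        (abs_real_inner_le_sq htv htw))) (abs_nonneg _) (sq_nonneg ε)
  have h1 : ‖v‖ ^ 2 * ‖S.normal w‖ ^ 2 ≤ K ^ 2 * ε ^ 2 := by gcongr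
  have h2 : ‖S.normal v‖ ^ 2 * ‖S.tangential w‖ ^ 2 ≤ ε ^ 2 * K ^ 2 := by gcongr
  linarith

lemma areaFactor_tangential_comp_le (H : ℝ² →L[ℝ] V) :
    areaFactor (S.tangential ∘L H) ≤ areaFactor H :=
  Real.sqrt_le_sqrt (S.sqArea_tangential_le _ _)

lemma areaFactor_sub_mul_le {K ε : ℝ} {H : ℝ² →L[ℝ] V} (hH : ‖H‖ ≤ K)
    (hnormal : ‖S.normal ∘L H‖ ≤ ε) :
    (areaFactor H - areaFactor (S.tangential ∘L H)) * areaFactor (S.tangential ∘L H)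
      ≤ 4 * K ^ 2 * ε ^ 2 := by
  have hle := S.areaFactor_tangential_comp_le H
  have hsq : areaFactor H ^ 2 ≤ areaFactor (S.tangential ∘L H) ^ 2 + 4 * K ^ 2 * ε ^ 2 := by
    rw [sq_areaFactor, sq_areaFactor]
    exact S.sqArea_le_sqArea_tangential_add (norm_apply_single_le hH 0) (norm_apply_single_le hH 1)
      (norm_apply_single_le hnormal 0) (norm_apply_single_le hnormal 1)
  nlinarith [areaFactor_nonneg (S.tangential ∘L H)]

end TangentSplitting

end AreaFactor

section KernelComparison

lemma abs_inv_pow_three_sub_le {x q : ℝ} (hq : 0 < q) (hx : q / 2 ≤ x) :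
    |(x ^ 3)⁻¹ - (q ^ 3)⁻¹| ≤ 12 * |x ^ 2 - q ^ 2| * (q ^ 5)⁻¹ := by
  have hx0 : 0 < x := by linarith
  have hfactor : (x ^ 3)⁻¹ - (q ^ 3)⁻¹ =
      (q ^ 2 - x ^ 2) * ((q ^ 2 + q * x + x ^ 2) / ((q + x) * x ^ 3 * q ^ 3)) := by
    field_simp
    ring
  have hquot : (q ^ 2 + q * x + x ^ 2) / ((q + x) * x ^ 3 * q ^ 3) ≤ 12 / q ^ 5 := by
    have hsum : q ^ 2 + q * x + x ^ 2 ≤ (q + x) * (q + x) := by nlinarith [mul_pos hq hx0]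
    have hcube : q ^ 2 * (q + x) ≤ 12 * x ^ 3 :=
      calc q ^ 2 * (q + x) ≤ (2 * x) ^ 2 * (3 * x) := by gcongr <;> linarith
        _ = 12 * x ^ 3 := by ring
    rw [div_le_div_iff₀ (by positivity) (by positivity)]
    calc (q ^ 2 + q * x + x ^ 2) * q ^ 5 ≤ ((q + x) * (q + x)) * q ^ 5 := by gcongr
      _ = (q + x) * q ^ 3 * (q ^ 2 * (q + x)) := by ring
      _ ≤ (q + x) * q ^ 3 * (12 * x ^ 3) := by gcongr
      _ = 12 * ((q + x) * x ^ 3 * q ^ 3) := by ring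
  calc |(x ^ 3)⁻¹ - (q ^ 3)⁻¹|
      = |x ^ 2 - q ^ 2| * ((q ^ 2 + q * x + x ^ 2) / ((q + x) * x ^ 3 * q ^ 3)) := by
        rw [hfactor, abs_mul, abs_sub_comm, abs_of_pos (a := _ / _) (by positivity)]
    _ ≤ |x ^ 2 - q ^ 2| * (12 / q ^ 5) := by gcongr
    _ = 12 * |x ^ 2 - q ^ 2| * (q ^ 5)⁻¹ := by ring

variable {E V : Type*} [NormedAddCommGroup E] [InnerProductSpace ℝ E] [NormedAddCommGroup V]
  [InnerProductSpace ℝ V]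

lemma abs_norm_sub_sq_sub_norm_sq_le (a b : V) :
    |‖a - b‖ ^ 2 - ‖a‖ ^ 2| ≤ 2 * ‖a‖ * ‖b‖ + ‖b‖ ^ 2 := by
  have hinner := abs_le.1 (abs_real_inner_le_norm a b)
  rw [norm_sub_sq_real]
  exact abs_le.2 ⟨by linarith [sq_nonneg ‖b‖], by linarith⟩

namespace TangentSplitting

variable {L : E →L[ℝ] V} (S : TangentSplitting L) {ν v : V} {M : ℝ}

lemma norm_sub_sq_of_orthogonal (hν : ∀ u, ⟪ν, L u⟫ = 0) (v : V) :
    ‖ν - v‖ ^ 2 = ‖S.tangential v‖ ^ 2 + ‖S.normal ν - S.normal v‖ ^ 2 := by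
  rw [S.norm_sq_eq, S.norm_tangential_sub_of_orthogonal hν, map_sub]

lemma half_flatDist_le_norm_sub (hν : ∀ u, ⟪ν, L u⟫ = 0)
    (hv : ‖S.normal v‖ ≤ M * ‖S.tangential v‖ ^ 2) (hM : M * ‖S.tangential v‖ ≤ 1 / 2) :
    flatDist ‖ν‖ ‖S.tangential v‖ / 2 ≤ ‖ν - v‖ := by
  have hhalf : ‖S.normal v‖ ≤ ‖S.tangential v‖ / 2 := by
    nlinarith [mul_le_mul_of_nonneg_right hM (norm_nonneg (S.tangential v))]
  have hν_le : ‖ν‖ ≤ ‖S.normal ν - S.normal v‖ + ‖S.normal v‖ := by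
    rw [← S.norm_normal_of_orthogonal hν]
    exact norm_le_norm_sub_add _ _
  refine le_of_sq_le_sq ?_ (norm_nonneg _)
  rw [div_pow, sq_flatDist, S.norm_sub_sq_of_orthogonal hν]
  nlinarith [norm_nonneg ν, norm_nonneg (S.normal v), norm_nonneg (S.tangential v),
    sq_nonneg (‖S.normal ν - S.normal v‖ - ‖S.normal v‖)]

lemma abs_inv_norm_sub_pow_three_sub_le (hν : ∀ u, ⟪ν, L u⟫ = 0) (hν0 : 0 < ‖ν‖)
    (hv : ‖S.normal v‖ ≤ M * ‖S.tangential v‖ ^ 2) (hM0 : 0 ≤ M)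
    (hM : M * ‖S.tangential v‖ ≤ 1 / 2) :
    |(‖ν - v‖ ^ 3)⁻¹ - (flatDist ‖ν‖ ‖S.tangential v‖ ^ 3)⁻¹|
      ≤ 12 * (2 * M + M ^ 2) * flatError ‖ν‖ ‖S.tangential v‖ := by
  set T := ‖ν‖
  set p := ‖S.tangential v‖
  set q := flatDist T p
  have hq : 0 < q := flatDist_pos hν0
  have hT : ‖S.normal ν‖ = T := S.norm_normal_of_orthogonal hν
  have hsq : |‖ν - v‖ ^ 2 - q ^ 2| ≤ 2 * T * (M * p ^ 2) + (M * p ^ 2) ^ 2 :=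
    calc |‖ν - v‖ ^ 2 - q ^ 2| = |‖S.normal ν - S.normal v‖ ^ 2 - ‖S.normal ν‖ ^ 2| := by
          rw [S.norm_sub_sq_of_orthogonal hν, sq_flatDist, hT]
          congr 1
          ring
      _ ≤ 2 * T * ‖S.normal v‖ + ‖S.normal v‖ ^ 2 :=
          hT ▸ abs_norm_sub_sq_sub_norm_sq_le (S.normal ν) (S.normal v)
      _ ≤ 2 * T * (M * p ^ 2) + (M * p ^ 2) ^ 2 := by gcongr
  have hpq : p ≤ q := le_flatDist_right
  calc |(‖ν - v‖ ^ 3)⁻¹ - (q ^ 3)⁻¹|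
      ≤ 12 * |‖ν - v‖ ^ 2 - q ^ 2| * (q ^ 5)⁻¹ :=
        abs_inv_pow_three_sub_le hq (S.half_flatDist_le_norm_sub hν hv hM)
    _ ≤ 12 * (2 * T * (M * q ^ 2) + (M * q ^ 2) ^ 2) * (q ^ 5)⁻¹ := by
        gcongr
        exact hsq.trans (by gcongr)
    _ = 12 * (2 * M * (T * (q ^ 3)⁻¹) + M ^ 2 * q⁻¹) := by field_simp
    _ ≤ 12 * (2 * M * flatError T p + M ^ 2 * flatError T p) := by
        gcongr
        · exact le_add_of_nonneg_right (by positivity)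
        · exact le_add_of_nonneg_left (by positivity)
    _ = 12 * (2 * M + M ^ 2) * flatError T p := by ring

end TangentSplitting

lemma abs_mul_mul_sub_mul_mul_le {φ φ₀ k k₀ a J Kφ Ka Φ κ α e : ℝ} (hJ : 0 ≤ J) (hk₀ : 0 ≤ k₀)
    (hφ : |φ| ≤ Kφ) (ha0 : 0 ≤ a) (ha : a ≤ Ka * J) (hk : |k - k₀| ≤ κ * e)
    (haJ : |a - J| * k₀ ≤ α * J * e) (hφφ₀ : |φ - φ₀| * k₀ ≤ Φ * e) :
    |φ * k * a - J * (φ₀ * k₀)| ≤ J * ((Kφ * Ka * κ + Kφ * α + Φ) * e) := by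
  have hKφ := (abs_nonneg φ).trans hφ
  have h1 : |φ * a * (k - k₀)| ≤ Kφ * (Ka * J) * (κ * e) := by
    rw [abs_mul, abs_mul, abs_of_nonneg ha0]
    exact mul_le_mul (mul_le_mul hφ ha ha0 hKφ) hk (abs_nonneg _) (mul_nonneg hKφ (ha0.trans ha))
  have h2 : |φ * (a - J) * k₀| ≤ Kφ * (α * J * e) := by
    rw [abs_mul, abs_mul, abs_of_nonneg hk₀, mul_assoc]
    gcongr
  have h3 : |(φ - φ₀) * k₀ * J| ≤ Φ * e * J := by
    rw [abs_mul, abs_mul, abs_of_nonneg hk₀, abs_of_nonneg hJ]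
    gcongr
  calc |φ * k * a - J * (φ₀ * k₀)|
      = |φ * a * (k - k₀) + φ * (a - J) * k₀ + (φ - φ₀) * k₀ * J| := by congr 1; ring
    _ ≤ Kφ * (Ka * J) * (κ * e) + Kφ * (α * J * e) + Φ * e * J :=
        (abs_add_three _ _ _).trans (by linarith)
    _ = J * ((Kφ * Ka * κ + Kφ * α + Φ) * e) := by ring

end KernelComparison

section TangentChart

variable {E V : Type*} [NormedAddCommGroup E] [InnerProductSpace ℝ E] [NormedAddCommGroup V]
  [InnerProductSpace ℝ V] {K : ℝ} {h : E → V} {σ₀ σ τ : E}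

/-- The parametrization `h` has bounded geometry at `σ₀`, with constant `K`: it is `C^{1,1}` on the
unit ball, where it contracts distances to `σ₀` by at most the factor `K`. The point `σ₀` is kept
away from the boundary of the ball. -/
structure HasBoundedGeometryAt (K : ℝ) (h : E → V) (σ₀ : E) : Prop where
  one_le : 1 ≤ K
  norm_center_le : ‖σ₀‖ ≤ 1 / 2
  isC11On : IsC11On K h (Metric.ball 0 1)
  norm_sub_le : ∀ σ ∈ Metric.ball (0 : E) 1, ‖σ - σ₀‖ ≤ K * ‖h σ - h σ₀‖

/-- The radius of the parameter ball around `σ₀` on which the tangential chart is injective. -/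
noncomputable def domainRadius (K : ℝ) : ℝ := 1 / (2 * K ^ 2)

/-- The radius of a ball in the tangent space that the tangential chart covers. -/
noncomputable def chartRadius (K : ℝ) : ℝ := 1 / (8 * K ^ 3)

lemma chartRadius_pos (hK : 0 < K) : 0 < chartRadius K := by
  unfold chartRadius
  positivity

namespace TangentSplitting

variable (S : TangentSplitting (fderiv ℝ h σ₀))

/-- The tangential coordinate of `h σ - h σ₀`. -/
def chart (σ : E) : E := S.tangential (h σ - h σ₀)

/-- The part of the parameter domain that the tangential chart identifies with the ball of radius
`chartRadius K`. -/
def patch (K : ℝ) : Set E :=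
  Metric.ball σ₀ (domainRadius K) ∩ S.chart ⁻¹' Metric.ball 0 (chartRadius K)

lemma chart_self : S.chart σ₀ = 0 := by
  rw [chart, sub_self, map_zero]

lemma chart_sub_chart (σ τ : E) : S.chart σ - S.chart τ = S.tangential (h σ - h τ) := by
  rw [chart, chart, ← map_sub, sub_sub_sub_cancel_right]

end TangentSplitting

lemma exists_inverse_of_norm_le [FiniteDimensional ℝ E] {A : E →L[ℝ] E} (hK : 0 ≤ K)
    (hA : ∀ u, ‖u‖ ≤ K * ‖A u‖) :
    ∃ B : E →L[ℝ] E, (∀ u, B (A u) = u) ∧ (∀ y, A (B y) = y) ∧ ‖B‖ ≤ K := by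
  have hinj : Function.Injective (A : E →ₗ[ℝ] E) :=
    (injective_iff_map_eq_zero _).2 fun u hu =>
      norm_le_zero_iff.1 <| (hA u).trans_eq <| by
        rw [show A u = 0 from hu, norm_zero, mul_zero]
  let e := LinearEquiv.ofInjectiveEndo (A : E →ₗ[ℝ] E) hinj
  have hright (y : E) : A (e.symm y) = y := e.apply_symm_apply y
  refine ⟨LinearMap.toContinuousLinearMap (e.symm : E →ₗ[ℝ] E), e.symm_apply_apply, hright,
    ContinuousLinearMap.opNorm_le_bound _ hK fun y => ?_⟩
  exact (hA (e.symm y)).trans_eq (by rw [hright])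

namespace HasBoundedGeometryAt

lemma pos (hh : HasBoundedGeometryAt K h σ₀) : 0 < K :=
  one_pos.trans_le hh.one_le

lemma domainRadius_pos (hh : HasBoundedGeometryAt K h σ₀) : 0 < domainRadius K := by
  have := hh.pos
  unfold domainRadius
  positivity

lemma center_mem_ball (hh : HasBoundedGeometryAt K h σ₀) : σ₀ ∈ Metric.ball (0 : E) 1 := by
  rw [mem_ball_zero_iff]
  linarith [hh.norm_center_le]

lemma ball_domainRadius_subset (hh : HasBoundedGeometryAt K h σ₀) :
    Metric.ball σ₀ (domainRadius K) ⊆ Metric.ball 0 1 := by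
  have hδ : domainRadius K ≤ 1 / 2 :=
    one_div_le_one_div_of_le two_pos (by nlinarith [hh.one_le])
  refine Metric.ball_subset_ball' ?_
  rw [dist_zero_right]
  linarith [hh.norm_center_le]

lemma norm_le_mul_norm_fderiv (hh : HasBoundedGeometryAt K h σ₀) (u : E) :
    ‖u‖ ≤ K * ‖fderiv ℝ h σ₀ u‖ := by
  have hlim := (hh.isC11On.differentiableAt σ₀ hh.center_mem_ball).hasFDerivAt.lim_real u
  have hshrink : Filter.Tendsto (fun c : ℝ => σ₀ + c⁻¹ • u) Filter.atTop (nhds σ₀) := by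
    simpa using (tendsto_inv_atTop_zero (𝕜 := ℝ)).smul_const u |>.const_add σ₀
  refine ge_of_tendsto (hlim.norm.const_mul K) ?_
  filter_upwards [hshrink.eventually_mem (Metric.isOpen_ball.mem_nhds hh.center_mem_ball),
    Filter.eventually_gt_atTop 0] with c hc hc0
  have hle := hh.norm_sub_le _ hc
  rw [add_sub_cancel_left, norm_smul, norm_inv, inv_mul_le_iff₀ (norm_pos_iff.2 hc0.ne')] at hle
  rw [norm_smul]
  linarith

lemma nonempty_tangentSplitting [FiniteDimensional ℝ E] (hh : HasBoundedGeometryAt K h σ₀) :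
    Nonempty (TangentSplitting (fderiv ℝ h σ₀)) := by
  refine TangentSplitting.nonempty_of_injective ((injective_iff_map_eq_zero _).2 fun u hu => ?_)
  simpa [hu] using hh.norm_le_mul_norm_fderiv u

lemma norm_normal_sub_le (hh : HasBoundedGeometryAt K h σ₀)
    (S : TangentSplitting (fderiv ℝ h σ₀)) (hσ : σ ∈ Metric.ball 0 1) :
    ‖S.normal (h σ - h σ₀)‖ ≤ K * ‖σ - σ₀‖ ^ 2 :=
  (S.norm_normal_le_norm_sub _ _).trans <|
    hh.isC11On.norm_sub_sub_fderiv_le_sq hh.pos.le (convex_ball 0 1) hh.center_mem_ball hσ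

variable (S : TangentSplitting (fderiv ℝ h σ₀))

lemma hasFDerivAt_chart (hh : HasBoundedGeometryAt K h σ₀) (hσ : σ ∈ Metric.ball 0 1) :
    HasFDerivAt S.chart (S.tangential ∘L fderiv ℝ h σ) σ :=
  S.tangential.hasFDerivAt.comp σ
    ((hh.isC11On.differentiableAt σ hσ).hasFDerivAt.sub_const (h σ₀))

lemma norm_le_mul_norm_tangential_fderiv (hh : HasBoundedGeometryAt K h σ₀) (u : E) :
    ‖u‖ ≤ K * ‖S.tangential (fderiv ℝ h σ₀ u)‖ :=
  (hh.norm_le_mul_norm_fderiv u).trans_eq (by rw [S.norm_tangential_apply])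

lemma norm_chart_sub_chart_sub_le (hh : HasBoundedGeometryAt K h σ₀)
    (hσ : σ ∈ Metric.ball σ₀ (domainRadius K)) (hτ : τ ∈ Metric.ball σ₀ (domainRadius K)) :
    ‖S.chart σ - S.chart τ - S.tangential (fderiv ℝ h σ₀ (σ - τ))‖ ≤ (2 * K)⁻¹ * ‖σ - τ‖ := by
  have hsub := hh.ball_domainRadius_subset
  have hball : Metric.ball σ₀ (domainRadius K) ⊆ Metric.closedBall σ₀ (domainRadius K) :=
    Metric.ball_subset_closedBall
  rw [S.chart_sub_chart, ← map_sub]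
  calc _ ≤ K * domainRadius K * ‖σ - τ‖ :=
        (S.norm_tangential_le _).trans <| hh.isC11On.norm_sub_sub_fderiv_le hh.pos.le
          (convex_ball 0 1) hh.center_mem_ball ⟨hsub hσ, hball hσ⟩ ⟨hsub hτ, hball hτ⟩
    _ = (2 * K)⁻¹ * ‖σ - τ‖ := by
        have := hh.pos
        unfold domainRadius
        field_simp

lemma norm_sub_le_mul_norm_chart_sub (hh : HasBoundedGeometryAt K h σ₀)
    (hσ : σ ∈ Metric.ball σ₀ (domainRadius K)) (hτ : τ ∈ Metric.ball σ₀ (domainRadius K)) :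
    ‖σ - τ‖ ≤ 2 * K * ‖S.chart σ - S.chart τ‖ := by
  have hK := hh.pos
  have hlinear := hh.norm_le_mul_norm_tangential_fderiv S (σ - τ)
  have herror := hh.norm_chart_sub_chart_sub_le S hσ hτ
  have htriangle := norm_le_norm_add_norm_sub (S.chart σ - S.chart τ)
    (S.tangential (fderiv ℝ h σ₀ (σ - τ)))
  have : K * ((2 * K)⁻¹ * ‖σ - τ‖) = ‖σ - τ‖ / 2 := by field_simp
  nlinarith

lemma norm_sub_le_mul_norm_chart (hh : HasBoundedGeometryAt K h σ₀)
    (hσ : σ ∈ Metric.ball σ₀ (domainRadius K)) : ‖σ - σ₀‖ ≤ 2 * K * ‖S.chart σ‖ := by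
  simpa only [S.chart_self, sub_zero] using
    hh.norm_sub_le_mul_norm_chart_sub S hσ (Metric.mem_ball_self hh.domainRadius_pos)

lemma injOn_chart (hh : HasBoundedGeometryAt K h σ₀) : Set.InjOn S.chart (S.patch K) := by
  intro σ hσ τ hτ hστ
  have hle := hh.norm_sub_le_mul_norm_chart_sub S hσ.1 hτ.1
  rwa [hστ, sub_self, norm_zero, mul_zero, norm_le_zero_iff, sub_eq_zero] at hle

lemma ball_subset_image_chart [FiniteDimensional ℝ E] (hh : HasBoundedGeometryAt K h σ₀) :
    Metric.ball 0 (chartRadius K) ⊆ S.chart '' Metric.ball σ₀ (domainRadius K) := by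
  have hK := hh.pos
  have hδ := hh.domainRadius_pos
  obtain ⟨B, -, hright, hB⟩ := exists_inverse_of_norm_le hK.le
    (A := S.tangential ∘L fderiv ℝ h σ₀) (hh.norm_le_mul_norm_tangential_fderiv S)
  have happrox : ApproximatesLinearOn S.chart (S.tangential ∘L fderiv ℝ h σ₀)
      (Metric.ball σ₀ (domainRadius K)) (.mk (2 * K)⁻¹ (by positivity)) :=
    fun σ hσ τ hτ => hh.norm_chart_sub_chart_sub_le S hσ hτ
  have hsurj : Set.SurjOn S.chart (Metric.closedBall σ₀ (domainRadius K / 2))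
      (Metric.closedBall (S.chart σ₀) ((K⁻¹ - (2 * K)⁻¹) * (domainRadius K / 2))) :=
    happrox.surjOn_closedBall_of_nonlinearRightInverse
      ⟨B, .mk K hK.le, fun y => B.le_of_opNorm_le hB y, hright⟩ (half_pos hδ).le
      (Metric.closedBall_subset_ball (half_lt_self hδ))
  have hradius : (K⁻¹ - (2 * K)⁻¹) * (domainRadius K / 2) = chartRadius K := by
    unfold domainRadius chartRadius
    field_simp
    norm_num
  rw [S.chart_self, hradius] at hsurj
  exact Metric.ball_subset_closedBall.trans <| hsurj.trans <|
    Set.image_mono (Metric.closedBall_subset_ball (half_lt_self hδ))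

lemma image_chart_patch [FiniteDimensional ℝ E] (hh : HasBoundedGeometryAt K h σ₀) :
    S.chart '' S.patch K = Metric.ball 0 (chartRadius K) := by
  rw [TangentSplitting.patch, Set.image_inter_preimage, Set.inter_eq_right]
  exact hh.ball_subset_image_chart S

lemma patch_subset_ball (hh : HasBoundedGeometryAt K h σ₀) : S.patch K ⊆ Metric.ball 0 1 :=
  Set.inter_subset_left.trans hh.ball_domainRadius_subset

lemma isOpen_patch (hh : HasBoundedGeometryAt K h σ₀) : IsOpen (S.patch K) := by
  refine ContinuousOn.isOpen_inter_preimage (fun σ hσ => ?_) Metric.isOpen_ball Metric.isOpen_ball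
  exact (hh.hasFDerivAt_chart S (hh.ball_domainRadius_subset hσ)).continuousAt.continuousWithinAt

lemma norm_normal_le_mul_sq_norm_chart (hh : HasBoundedGeometryAt K h σ₀)
    (hσ : σ ∈ Metric.ball σ₀ (domainRadius K)) :
    ‖S.normal (h σ - h σ₀)‖ ≤ 4 * K ^ 3 * ‖S.chart σ‖ ^ 2 := by
  have hK := hh.pos
  calc ‖S.normal (h σ - h σ₀)‖ ≤ K * ‖σ - σ₀‖ ^ 2 :=
        hh.norm_normal_sub_le S (hh.ball_domainRadius_subset hσ)
    _ ≤ K * (2 * K * ‖S.chart σ‖) ^ 2 := by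
        gcongr
        exact hh.norm_sub_le_mul_norm_chart S hσ
    _ = 4 * K ^ 3 * ‖S.chart σ‖ ^ 2 := by ring

lemma mul_norm_chart_le_half (hh : HasBoundedGeometryAt K h σ₀) (hσ : σ ∈ S.patch K) :
    4 * K ^ 3 * ‖S.chart σ‖ ≤ 1 / 2 := by
  have hK := hh.pos
  calc 4 * K ^ 3 * ‖S.chart σ‖ ≤ 4 * K ^ 3 * chartRadius K := by
        gcongr
        exact (mem_ball_zero_iff.1 hσ.2).le
    _ = 1 / 2 := by
        unfold chartRadius
        field_simp
        norm_num

lemma norm_le_mul_norm_tangential_fderiv_of_mem (hh : HasBoundedGeometryAt K h σ₀)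
    (hσ : σ ∈ Metric.ball σ₀ (domainRadius K)) (u : E) :
    ‖u‖ ≤ 2 * K * ‖S.tangential (fderiv ℝ h σ u)‖ := by
  have hK := hh.pos
  have hcenter := hh.norm_le_mul_norm_tangential_fderiv S u
  have hvariation : ‖S.tangential (fderiv ℝ h σ u) - S.tangential (fderiv ℝ h σ₀ u)‖
      ≤ (2 * K)⁻¹ * ‖u‖ := by
    rw [← map_sub]
    calc _ ≤ ‖fderiv ℝ h σ - fderiv ℝ h σ₀‖ * ‖u‖ :=
          (S.norm_tangential_le _).trans ((fderiv ℝ h σ - fderiv ℝ h σ₀).le_opNorm u)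
      _ ≤ K * domainRadius K * ‖u‖ := by
          gcongr
          refine (hh.isC11On.norm_fderiv_sub_le σ (hh.ball_domainRadius_subset hσ) σ₀
            hh.center_mem_ball).trans ?_
          gcongr
          exact (mem_ball_iff_norm.1 hσ).le
      _ = (2 * K)⁻¹ * ‖u‖ := by
          unfold domainRadius
          field_simp
  have htriangle := norm_le_norm_add_norm_sub (S.tangential (fderiv ℝ h σ u))
    (S.tangential (fderiv ℝ h σ₀ u))
  have : K * ((2 * K)⁻¹ * ‖u‖) = ‖u‖ / 2 := by field_simp
  nlinarith

lemma exists_norm_sub_affine_chart_le [FiniteDimensional ℝ E] {F : Type*} [NormedAddCommGroup F]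
    [NormedSpace ℝ F] {f : E → F} (hh : HasBoundedGeometryAt K h σ₀)
    (hf : IsC11On K f (Metric.ball 0 1)) :
    ∃ l : E →L[ℝ] F, ∀ σ ∈ Metric.ball σ₀ (domainRadius K),
      ‖f σ - (f σ₀ + l (S.chart σ))‖ ≤ 8 * K ^ 5 * ‖S.chart σ‖ ^ 2 := by
  have hK := hh.pos
  obtain ⟨B, hleft : ∀ u, B (S.tangential (fderiv ℝ h σ₀ u)) = u, -, hB⟩ :=
    exists_inverse_of_norm_le (A := S.tangential ∘L fderiv ℝ h σ₀) hK.le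
      (hh.norm_le_mul_norm_tangential_fderiv S)
  refine ⟨fderiv ℝ f σ₀ ∘L B, fun σ hσδ => ?_⟩
  have hσ := hh.ball_domainRadius_subset hσδ
  have hchart : ‖S.chart σ - S.tangential (fderiv ℝ h σ₀ (σ - σ₀))‖ ≤ K * ‖σ - σ₀‖ ^ 2 := by
    rw [TangentSplitting.chart, ← map_sub]
    exact (S.norm_tangential_le _).trans <|
      hh.isC11On.norm_sub_sub_fderiv_le_sq hK.le (convex_ball 0 1) hh.center_mem_ball hσ
  have hinverse : ‖B (S.chart σ) - (σ - σ₀)‖ ≤ K * (K * ‖σ - σ₀‖ ^ 2) := by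
    have hle := B.le_of_opNorm_le_of_le hB hchart
    rwa [map_sub B, hleft] at hle
  calc ‖f σ - (f σ₀ + fderiv ℝ f σ₀ (B (S.chart σ)))‖
      = ‖f σ - f σ₀ - fderiv ℝ f σ₀ (σ - σ₀)
          - fderiv ℝ f σ₀ (B (S.chart σ) - (σ - σ₀))‖ := by
        rw [map_sub _ (B _)]
        congr 1
        abel
    _ ≤ K * ‖σ - σ₀‖ ^ 2 + K * (K * (K * ‖σ - σ₀‖ ^ 2)) :=
        norm_sub_le_of_le
          (hf.norm_sub_sub_fderiv_le_sq hK.le (convex_ball 0 1) hh.center_mem_ball hσ)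
          ((fderiv ℝ f σ₀).le_of_opNorm_le_of_le (hf.norm_fderiv_le σ₀ hh.center_mem_ball) hinverse)
    _ ≤ 2 * K ^ 3 * ‖σ - σ₀‖ ^ 2 := by
        nlinarith [mul_nonneg (sub_nonneg.2 (le_self_pow₀ hh.one_le three_ne_zero))
          (sq_nonneg ‖σ - σ₀‖)]
    _ ≤ 2 * K ^ 3 * (2 * K * ‖S.chart σ‖) ^ 2 := by
        gcongr
        exact hh.norm_sub_le_mul_norm_chart S hσδ
    _ = 8 * K ^ 5 * ‖S.chart σ‖ ^ 2 := by ring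

variable {s : V}

lemma chartRadius_le_norm_sub (hh : HasBoundedGeometryAt K h σ₀)
    (hs : ∀ u, ⟪s - h σ₀, fderiv ℝ h σ₀ u⟫ = 0) (hsr : ‖s - h σ₀‖ ≤ chartRadius K)
    (hσ : σ ∈ Metric.ball 0 1 \ S.patch K) : chartRadius K ≤ ‖s - h σ‖ := by
  have hK := hh.pos
  by_cases hσδ : σ ∈ Metric.ball σ₀ (domainRadius K)
  · calc chartRadius K ≤ ‖S.chart σ‖ := by
          by_contra! hlt
          exact hσ.2 ⟨hσδ, mem_ball_zero_iff.2 hlt⟩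
      _ = ‖S.tangential (s - h σ)‖ := by
          rw [← sub_sub_sub_cancel_right s (h σ) (h σ₀), S.norm_tangential_sub_of_orthogonal hs,
            TangentSplitting.chart]
      _ ≤ ‖s - h σ‖ := S.norm_tangential_le _
  · have hfar : domainRadius K ≤ K * ‖h σ - h σ₀‖ :=
      (not_lt.1 (mt mem_ball_iff_norm.2 hσδ)).trans (hh.norm_sub_le σ hσ.1)
    have hradii : domainRadius K = K * (4 * chartRadius K) := by
      unfold domainRadius chartRadius
      field_simp
      norm_num
    have hfour : 4 * chartRadius K ≤ ‖h σ - h σ₀‖ :=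
      le_of_mul_le_mul_left (hradii ▸ hfar) hK
    have htriangle := norm_sub_le_norm_sub_add_norm_sub (h σ) s (h σ₀)
    rw [norm_sub_rev (h σ) s] at htriangle
    linarith [norm_nonneg (s - h σ₀)]

lemma half_norm_le_norm_sub [FiniteDimensional ℝ E] (hh : HasBoundedGeometryAt K h σ₀)
    (hs : ∀ u, ⟪s - h σ₀, fderiv ℝ h σ₀ u⟫ = 0) (hsr : ‖s - h σ₀‖ ≤ chartRadius K)
    (hσ : σ ∈ Metric.ball 0 1) : ‖s - h σ₀‖ / 2 ≤ ‖s - h σ‖ := by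
  obtain ⟨S⟩ := hh.nonempty_tangentSplitting
  by_cases hpatch : σ ∈ S.patch K
  · have hflat := S.half_flatDist_le_norm_sub hs
      (hh.norm_normal_le_mul_sq_norm_chart S hpatch.1) (hh.mul_norm_chart_le_half S hpatch)
    rw [sub_sub_sub_cancel_right] at hflat
    exact (div_le_div_of_nonneg_right le_flatDist_left two_pos.le).trans hflat
  · linarith [hh.chartRadius_le_norm_sub S hs hsr ⟨hσ, hpatch⟩, norm_nonneg (s - h σ₀)]

lemma abs_inv_norm_sub_pow_three_sub_flat_le (hh : HasBoundedGeometryAt K h σ₀)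
    (hs : ∀ u, ⟪s - h σ₀, fderiv ℝ h σ₀ u⟫ = 0) (hs0 : 0 < ‖s - h σ₀‖) (hσ : σ ∈ S.patch K) :
    |(‖s - h σ‖ ^ 3)⁻¹ - (flatDist ‖s - h σ₀‖ ‖S.chart σ‖ ^ 3)⁻¹| ≤
      288 * K ^ 6 * flatError ‖s - h σ₀‖ ‖S.chart σ‖ := by
  have hK := hh.pos
  have hle := S.abs_inv_norm_sub_pow_three_sub_le hs hs0
    (hh.norm_normal_le_mul_sq_norm_chart S hσ.1) (by positivity) (hh.mul_norm_chart_le_half S hσ)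
  rw [sub_sub_sub_cancel_right] at hle
  refine hle.trans (mul_le_mul_of_nonneg_right ?_ (flatError_nonneg hs0))
  nlinarith [mul_nonneg (pow_nonneg hK.le 3) (sub_nonneg.2 (one_le_pow₀ hh.one_le (n := 3)))]

end HasBoundedGeometryAt

end TangentChart

section GreenIntegral

variable {V : Type*} [NormedAddCommGroup V] [InnerProductSpace ℝ V] {K : ℝ} {h : ℝ² → V}
  {f : ℝ² → ℝ} {σ₀ σ : ℝ²} {s : V}

/-- The integrand of the Green integral of the density `f` over the surface parametrized by `h`, at
the point `s`, without the constant `-1 / (8 * π ^ 2)`. -/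
noncomputable def greenIntegrand (h : ℝ² → V) (f : ℝ² → ℝ) (s : V) (σ : ℝ²) : ℝ :=
  f σ * (‖s - h σ‖ ^ 3)⁻¹ * areaFactor (fderiv ℝ h σ)

/-- The bound obtained for the difference of the Green integral and its leading asymptote. Its three
terms come from truncating the flat model to a disc, from the curvature inside the patch and from
the part of the surface outside the patch. -/
noncomputable def greenErrorBound (K : ℝ) : ℝ :=
  1 / (8 * Real.pi ^ 2) * (2 * Real.pi * K / chartRadius K +
    1500 * K ^ 11 * (2 * Real.pi * (1 + chartRadius K)) +
    K * (chartRadius K ^ 3)⁻¹ * K ^ 2 * Real.pi)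

lemma greenErrorBound_pos (hK : 0 < K) : 0 < greenErrorBound K := by
  have := chartRadius_pos hK
  unfold greenErrorBound
  positivity

namespace HasBoundedGeometryAt

lemma sq_inv_le_areaFactor_tangential (hh : HasBoundedGeometryAt K h σ₀)
    (S : TangentSplitting (fderiv ℝ h σ₀)) (hσ : σ ∈ S.patch K) :
    (2 * K)⁻¹ ^ 2 ≤ areaFactor (S.tangential ∘L fderiv ℝ h σ) := by
  have hK := hh.pos
  refine sq_le_areaFactor (by positivity) fun u => ?_
  rw [inv_mul_le_iff₀ (by positivity)]
  exact hh.norm_le_mul_norm_tangential_fderiv_of_mem S hσ.1 u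

lemma areaFactor_le_mul_areaFactor_tangential (hh : HasBoundedGeometryAt K h σ₀)
    (S : TangentSplitting (fderiv ℝ h σ₀)) (hσ : σ ∈ S.patch K) :
    areaFactor (fderiv ℝ h σ) ≤ 4 * K ^ 4 * areaFactor (S.tangential ∘L fderiv ℝ h σ) := by
  have hK := hh.pos
  calc areaFactor (fderiv ℝ h σ) ≤ K ^ 2 :=
        areaFactor_le (hh.isC11On.norm_fderiv_le σ (hh.patch_subset_ball S hσ))
    _ = 4 * K ^ 4 * (2 * K)⁻¹ ^ 2 := by
        field_simp
        norm_num
    _ ≤ _ := by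
        gcongr
        exact hh.sq_inv_le_areaFactor_tangential S hσ

lemma abs_areaFactor_sub_le (hh : HasBoundedGeometryAt K h σ₀)
    (S : TangentSplitting (fderiv ℝ h σ₀)) (hσ : σ ∈ S.patch K) :
    |areaFactor (fderiv ℝ h σ) - areaFactor (S.tangential ∘L fderiv ℝ h σ)| ≤
      256 * K ^ 10 * areaFactor (S.tangential ∘L fderiv ℝ h σ) * ‖S.chart σ‖ ^ 2 := by
  have hK := hh.pos
  have hball := hh.patch_subset_ball S hσ
  set J := areaFactor (S.tangential ∘L fderiv ℝ h σ)
  have hJ : (2 * K)⁻¹ ^ 2 ≤ J := hh.sq_inv_le_areaFactor_tangential S hσ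
  have hJ0 : 0 < J := lt_of_lt_of_le (by positivity) hJ
  have hnormal : ‖S.normal ∘L fderiv ℝ h σ‖ ≤ K * (2 * K * ‖S.chart σ‖) := by
    refine (S.norm_normal_comp_le _).trans <|
      (hh.isC11On.norm_fderiv_sub_le σ hball σ₀ hh.center_mem_ball).trans ?_
    gcongr
    exact hh.norm_sub_le_mul_norm_chart S hσ.1
  have hdiff := S.areaFactor_sub_mul_le (hh.isC11On.norm_fderiv_le σ hball) hnormal
  rw [abs_of_nonneg (sub_nonneg.2 (S.areaFactor_tangential_comp_le _))]
  refine le_of_mul_le_mul_right (hdiff.trans ?_) hJ0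
  calc 4 * K ^ 2 * (K * (2 * K * ‖S.chart σ‖)) ^ 2
      = 256 * K ^ 10 * ((2 * K)⁻¹ ^ 2) ^ 2 * ‖S.chart σ‖ ^ 2 := by
        field_simp
        ring
    _ ≤ 256 * K ^ 10 * J ^ 2 * ‖S.chart σ‖ ^ 2 := by gcongr
    _ = 256 * K ^ 10 * J * ‖S.chart σ‖ ^ 2 * J := by ring

lemma abs_greenIntegrand_sub_flat_le (hh : HasBoundedGeometryAt K h σ₀)
    (S : TangentSplitting (fderiv ℝ h σ₀)) (hs : ∀ u, ⟪s - h σ₀, fderiv ℝ h σ₀ u⟫ = 0)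
    (hs0 : 0 < ‖s - h σ₀‖) (hσ : σ ∈ S.patch K) (hfσ : |f σ| ≤ K) {φ : ℝ}
    (hφ : |f σ - φ| ≤ 8 * K ^ 5 * ‖S.chart σ‖ ^ 2) :
    |greenIntegrand h f s σ - |(S.tangential ∘L fderiv ℝ h σ).det| *
        (φ * (flatDist ‖s - h σ₀‖ ‖S.chart σ‖ ^ 3)⁻¹)| ≤
      |(S.tangential ∘L fderiv ℝ h σ).det| *
        (1500 * K ^ 11 * flatError ‖s - h σ₀‖ ‖S.chart σ‖) := by
  have hK := hh.pos
  have hinv : 0 ≤ (flatDist ‖s - h σ₀‖ ‖S.chart σ‖ ^ 3)⁻¹ := by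
    have := flatDist_pos (r := ‖S.chart σ‖) hs0
    positivity
  have hsq := sq_mul_inv_flatDist_pow_three_le (r := ‖S.chart σ‖) hs0
  have he := flatError_nonneg (r := ‖S.chart σ‖) hs0
  have hkernel := hh.abs_inv_norm_sub_pow_three_sub_flat_le S hs hs0 hσ
  rw [← areaFactor_eq_abs_det]
  set J := areaFactor (S.tangential ∘L fderiv ℝ h σ)
  have hJ : 0 ≤ J := areaFactor_nonneg _
  refine (abs_mul_mul_sub_mul_mul_le hJ hinv hfσ (areaFactor_nonneg _)
    (hh.areaFactor_le_mul_areaFactor_tangential S hσ) hkernel (α := 256 * K ^ 10)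
    (Φ := 8 * K ^ 5) ?_ ?_).trans ?_
  · refine (mul_le_mul_of_nonneg_right (hh.abs_areaFactor_sub_le S hσ) hinv).trans ?_
    rw [mul_assoc]
    gcongr
  · refine (mul_le_mul_of_nonneg_right hφ hinv).trans ?_
    rw [mul_assoc]
    gcongr
  · have hpow : K ^ 5 ≤ K ^ 11 := pow_le_pow_right₀ hh.one_le (by norm_num)
    gcongr
    linarith [pow_nonneg hK.le 11]

lemma continuousOn_greenIntegrand (hh : HasBoundedGeometryAt K h σ₀)
    (hf : ContinuousOn f (Metric.ball 0 1)) (hne : ∀ σ ∈ Metric.ball (0 : ℝ²) 1, s ≠ h σ) :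
    ContinuousOn (greenIntegrand h f s) (Metric.ball 0 1) := by
  refine (hf.mul (ContinuousOn.inv₀ ?_ fun σ hσ => ?_)).mul
    (continuous_areaFactor.comp_continuousOn hh.isC11On.continuousOn_fderiv)
  · exact (continuousOn_const.sub hh.isC11On.continuousOn).norm.pow 3
  · exact pow_ne_zero 3 (norm_ne_zero_iff.2 (sub_ne_zero.2 (hne σ hσ)))

lemma abs_greenIntegrand_le (hh : HasBoundedGeometryAt K h σ₀) {d : ℝ} (hd : 0 < d)
    (hσ : σ ∈ Metric.ball 0 1) (hfσ : |f σ| ≤ K) (hds : d ≤ ‖s - h σ‖) :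
    |greenIntegrand h f s σ| ≤ K * (d ^ 3)⁻¹ * K ^ 2 := by
  have hK := hh.pos
  rw [greenIntegrand, abs_mul, abs_mul, abs_of_nonneg (areaFactor_nonneg _),
    abs_of_nonneg (a := (_ : ℝ)⁻¹) (by positivity)]
  gcongr
  · exact areaFactor_nonneg _
  · exact areaFactor_le (hh.isC11On.norm_fderiv_le σ hσ)

lemma integrableOn_greenIntegrand (hh : HasBoundedGeometryAt K h σ₀)
    (hf : IsC11On K f (Metric.ball 0 1)) (hfK : ∀ σ ∈ Metric.ball 0 1, |f σ| ≤ K)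
    (hs : ∀ u, ⟪s - h σ₀, fderiv ℝ h σ₀ u⟫ = 0) (hs0 : 0 < ‖s - h σ₀‖)
    (hsr : ‖s - h σ₀‖ ≤ chartRadius K) :
    IntegrableOn (greenIntegrand h f s) (Metric.ball 0 1) := by
  have hdist := fun σ hσ => hh.half_norm_le_norm_sub hs hsr (σ := σ) hσ
  have hcont := hh.continuousOn_greenIntegrand hf.continuousOn (s := s) fun σ hσ =>
    sub_ne_zero.1 (norm_pos_iff.1 ((half_pos hs0).trans_le (hdist σ hσ)))
  exact ⟨hcont.aestronglyMeasurable measurableSet_ball,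
    .restrict_of_bounded _ measure_ball_lt_top <|
      ae_restrict_of_forall_mem measurableSet_ball fun σ hσ =>
        hh.abs_greenIntegrand_le (half_pos hs0) hσ (hfK σ hσ) (hdist σ hσ)⟩

lemma abs_setIntegral_patch_sub_le (hh : HasBoundedGeometryAt K h σ₀)
    (S : TangentSplitting (fderiv ℝ h σ₀)) (hf : IsC11On K f (Metric.ball 0 1))
    (hfK : ∀ σ ∈ Metric.ball 0 1, |f σ| ≤ K)
    (hs : ∀ u, ⟪s - h σ₀, fderiv ℝ h σ₀ u⟫ = 0) (hs0 : 0 < ‖s - h σ₀‖)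
    (hsr : ‖s - h σ₀‖ ≤ chartRadius K) :
    |(∫ σ in S.patch K, greenIntegrand h f s σ) - 2 * Real.pi * f σ₀ / ‖s - h σ₀‖| ≤
      2 * Real.pi * K / chartRadius K +
        1500 * K ^ 11 * (2 * Real.pi * (1 + chartRadius K)) := by
  have hK := hh.pos
  have hρ := chartRadius_pos hK
  obtain ⟨l, hl⟩ := hh.exists_norm_sub_affine_chart_le S hf
  have hflat := abs_setIntegral_ball_affine_sub_le hs0 hρ (f σ₀) l
  have hcurved := abs_setIntegral_sub_setIntegral_image_le (μ := volume)
    (hh.isOpen_patch S).measurableSet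
    (fun σ hσ => (hh.hasFDerivAt_chart S (hh.patch_subset_ball S hσ)).hasFDerivWithinAt)
    (hh.injOn_chart S)
    ((hh.integrableOn_greenIntegrand hf hfK hs hs0 hsr).mono_set (hh.patch_subset_ball S))
    (m := fun y => (f σ₀ + l y) * (flatDist ‖s - h σ₀‖ ‖y‖ ^ 3)⁻¹)
    (e := fun y => 1500 * K ^ 11 * flatError ‖s - h σ₀‖ ‖y‖)
    (hh.image_chart_patch S ▸ integrableOn_ball_of_continuous
      (continuous_affine_mul_inv_flatDist_pow_three hs0 (f σ₀) l))
    (hh.image_chart_patch S ▸ integrableOn_ball_of_continuous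
      (((continuous_flatError hs0).comp continuous_norm).const_mul _))
    (fun σ hσ => hh.abs_greenIntegrand_sub_flat_le S hs hs0 hσ
      (hfK σ (hh.patch_subset_ball S hσ)) (hl σ hσ.1))
  rw [hh.image_chart_patch S, integral_const_mul] at hcurved
  calc _ ≤ 1500 * K ^ 11 * (∫ y in Metric.ball (0 : ℝ²) (chartRadius K),
          flatError ‖s - h σ₀‖ ‖y‖) + 2 * Real.pi * |f σ₀| / chartRadius K :=
        (abs_sub_le _ _ _).trans (add_le_add hcurved hflat)
    _ ≤ 1500 * K ^ 11 * (2 * Real.pi * (1 + chartRadius K)) +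
          2 * Real.pi * K / chartRadius K := by
        gcongr
        · exact setIntegral_ball_flatError_le hs0 hρ.le
        · exact hfK σ₀ hh.center_mem_ball
    _ = _ := add_comm _ _

lemma abs_setIntegral_diff_patch_le (hh : HasBoundedGeometryAt K h σ₀)
    (S : TangentSplitting (fderiv ℝ h σ₀)) (hfK : ∀ σ ∈ Metric.ball 0 1, |f σ| ≤ K)
    (hs : ∀ u, ⟪s - h σ₀, fderiv ℝ h σ₀ u⟫ = 0) (hsr : ‖s - h σ₀‖ ≤ chartRadius K) :
    |∫ σ in Metric.ball 0 1 \ S.patch K, greenIntegrand h f s σ| ≤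
      K * (chartRadius K ^ 3)⁻¹ * K ^ 2 * Real.pi := by
  have hK := hh.pos
  have hρ := chartRadius_pos hK
  have hsub : Metric.ball 0 1 \ S.patch K ⊆ Metric.ball 0 1 := Set.sdiff_subset
  have hbound : ∀ σ ∈ Metric.ball 0 1 \ S.patch K,
      ‖greenIntegrand h f s σ‖ ≤ K * (chartRadius K ^ 3)⁻¹ * K ^ 2 := fun σ hσ =>
    hh.abs_greenIntegrand_le hρ hσ.1 (hfK σ hσ.1) (hh.chartRadius_le_norm_sub S hs hsr hσ)
  refine (norm_setIntegral_le_of_norm_le_const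
    ((measure_mono hsub).trans_lt measure_ball_lt_top) hbound).trans ?_
  gcongr
  calc volume.real (Metric.ball 0 1 \ S.patch K) ≤ volume.real (Metric.ball (0 : ℝ²) 1) :=
        measureReal_mono hsub measure_ball_lt_top.ne
    _ = Real.pi := volume_real_ball_one 0

lemma abs_setIntegral_greenIntegrand_sub_le (hh : HasBoundedGeometryAt K h σ₀)
    (hf : IsC11On K f (Metric.ball 0 1)) (hfK : ∀ σ ∈ Metric.ball 0 1, |f σ| ≤ K)
    (hs : ∀ u, ⟪s - h σ₀, fderiv ℝ h σ₀ u⟫ = 0) (hs0 : 0 < ‖s - h σ₀‖)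
    (hsr : ‖s - h σ₀‖ ≤ chartRadius K) :
    |(∫ σ in Metric.ball 0 1, greenIntegrand h f s σ) - 2 * Real.pi * f σ₀ / ‖s - h σ₀‖| ≤
      2 * Real.pi * K / chartRadius K + 1500 * K ^ 11 * (2 * Real.pi * (1 + chartRadius K)) +
        K * (chartRadius K ^ 3)⁻¹ * K ^ 2 * Real.pi := by
  obtain ⟨S⟩ := hh.nonempty_tangentSplitting
  have hint := hh.integrableOn_greenIntegrand hf hfK hs hs0 hsr
  have hpatch := hh.abs_setIntegral_patch_sub_le S hf hfK hs hs0 hsr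
  have hrest := hh.abs_setIntegral_diff_patch_le S hfK hs hsr
  rw [← integral_inter_add_sdiff (hh.isOpen_patch S).measurableSet hint,
    Set.inter_eq_right.2 (hh.patch_subset_ball S), add_sub_right_comm]
  exact (abs_add_le _ _).trans (add_le_add hpatch hrest)

end HasBoundedGeometryAt

end GreenIntegral

theorem statement17_general {V : Type*} [NormedAddCommGroup V] [InnerProductSpace ℝ V] {K : ℝ}
    {h : ℝ² → V} {f : ℝ² → ℝ} {σ₀ : ℝ²} {s : V} (hh : HasBoundedGeometryAt K h σ₀)
    (hf : IsC11On K f (Metric.ball 0 1)) (hfK : ∀ σ ∈ Metric.ball 0 1, |f σ| ≤ K)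
    (hs : ∀ u, ⟪s - h σ₀, fderiv ℝ h σ₀ u⟫ = 0) (hs0 : 0 < ‖s - h σ₀‖)
    (hsr : ‖s - h σ₀‖ ≤ chartRadius K) :
    IntegrableOn (greenIntegrand h f s) (Metric.ball 0 1) ∧
      |-(1 / (8 * Real.pi ^ 2)) * (∫ σ in Metric.ball 0 1, greenIntegrand h f s σ) +
        f σ₀ / (4 * Real.pi * ‖s - h σ₀‖)| ≤ greenErrorBound K := by
  refine ⟨hh.integrableOn_greenIntegrand hf hfK hs hs0 hsr, ?_⟩
  calc _ = |-(1 / (8 * Real.pi ^ 2)) * ((∫ σ in Metric.ball 0 1, greenIntegrand h f s σ) -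
          2 * Real.pi * f σ₀ / ‖s - h σ₀‖)| := by
        congr 1
        field_simp
        ring
    _ ≤ greenErrorBound K := by
        rw [abs_mul, abs_neg, abs_of_pos (a := 1 / _) (by positivity)]
        exact mul_le_mul_of_nonneg_left
          (hh.abs_setIntegral_greenIntegrand_sub_le hf hfK hs hs0 hsr) (by positivity)

section GraphMap

local notation "ℝ⁵" => EuclideanSpace ℝ (Fin 5)

/-- The inclusion of the plane into the first two coordinates of `ℝ⁵`: the part of a graph map that
does not depend on the graphed functions. -/
noncomputable def planeInclusion : ℝ² →L[ℝ] ℝ⁵ :=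
  (EuclideanSpace.proj 0).smulRight (EuclideanSpace.single 0 1) +
    (EuclideanSpace.proj 1).smulRight (EuclideanSpace.single 1 1)

variable {f3 f4 f5 : ℝ² → ℝ} {C : ℝ}

lemma norm_planeInclusion_le : ‖planeInclusion‖ ≤ 1 := by
  refine ContinuousLinearMap.opNorm_le_bound _ zero_le_one fun u => ?_
  simp [EuclideanSpace.norm_eq, Fin.sum_univ_succ, planeInclusion]

lemma graphMap_eq_planeInclusion_add : graphMap f3 f4 f5 =
    ⇑planeInclusion + (fun σ => f3 σ • (EuclideanSpace.single 2 1 : ℝ⁵)) +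
      (fun σ => f4 σ • (EuclideanSpace.single 3 1 : ℝ⁵)) +
      fun σ => f5 σ • (EuclideanSpace.single 4 1 : ℝ⁵) := by
  ext σ i
  fin_cases i <;> simp [graphMap, planeInclusion]

lemma isC11On_graphMap {s : Set ℝ²} (h3 : IsC11On C f3 s) (h4 : IsC11On C f4 s)
    (h5 : IsC11On C f5 s) : IsC11On (1 + 3 * C) (graphMap f3 f4 f5) s := by
  have hsmul {f : ℝ² → ℝ} (hf : IsC11On C f s) (i : Fin 5) :
      IsC11On C (fun σ => f σ • (EuclideanSpace.single i 1 : ℝ⁵)) s := by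
    simpa using hf.smul_const (EuclideanSpace.single i 1 : ℝ⁵)
  rw [graphMap_eq_planeInclusion_add, show 1 + 3 * C = 1 + C + C + C by ring]
  exact (((IsC11On.of_clm norm_planeInclusion_le).add (hsmul h3 2)).add (hsmul h4 3)).add
    (hsmul h5 4)

lemma norm_sub_le_norm_graphMap_sub (σ τ : ℝ²) :
    ‖σ - τ‖ ≤ ‖graphMap f3 f4 f5 σ - graphMap f3 f4 f5 τ‖ := by
  rw [EuclideanSpace.norm_eq, EuclideanSpace.norm_eq]
  refine Real.sqrt_le_sqrt ?_
  rw [Fin.sum_univ_two, Fin.sum_univ_five]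
  change _ ≤ ‖(σ - τ) 0‖ ^ 2 + ‖(σ - τ) 1‖ ^ 2 + _ ^ 2 + _ ^ 2 + _ ^ 2
  rw [add_assoc, add_assoc]
  exact le_add_of_nonneg_right (by positivity)

lemma hasBoundedGeometryAt_graphMap (hC : 0 ≤ C) (h3 : IsC11On C f3 (Metric.ball 0 1))
    (h4 : IsC11On C f4 (Metric.ball 0 1)) (h5 : IsC11On C f5 (Metric.ball 0 1)) {σ₀ : ℝ²}
    (hσ₀ : ‖σ₀‖ ≤ 1 / 2) : HasBoundedGeometryAt (1 + 3 * C) (graphMap f3 f4 f5) σ₀ where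
  one_le := by linarith
  norm_center_le := hσ₀
  isC11On := isC11On_graphMap h3 h4 h5
  norm_sub_le σ _ := (norm_sub_le_norm_graphMap_sub σ σ₀).trans
    (le_mul_of_one_le_left (norm_nonneg _) (by linarith))

end GraphMap

section NormalVectors

variable {V : Type*} [NormedAddCommGroup V] [InnerProductSpace ℝ V] {n1 n2 n3 ν : V}

lemma norm_add_smul_of_orthonormal (hn1 : ‖n1‖ = 1) (hn2 : ‖n2‖ = 1) (hn3 : ‖n3‖ = 1)
    (h12 : ⟪n1, n2⟫ = 0) (h13 : ⟪n1, n3⟫ = 0) (h23 : ⟪n2, n3⟫ = 0) (t1 t2 t3 : ℝ) :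
    ‖t1 • n1 + t2 • n2 + t3 • n3‖ = √(t1 ^ 2 + t2 ^ 2 + t3 ^ 2) := by
  refine (Real.sqrt_eq_iff_eq_sq (by positivity) (norm_nonneg _)).2 ?_ |>.symm
  simp [norm_add_sq_real, inner_add_left, real_inner_smul_left, real_inner_smul_right, norm_smul,
    hn1, hn2, hn3, h12, h13, h23]

lemma inner_clm_eq_zero_of_single {ι : Type*} [Finite ι] [DecidableEq ι]
    {L : EuclideanSpace ℝ ι →L[ℝ] V} (hν : ∀ i, ⟪ν, L (EuclideanSpace.single i 1)⟫ = 0)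
    (u : EuclideanSpace ℝ ι) : ⟪ν, L u⟫ = 0 := by
  cases nonempty_fintype ι
  have hzero : (innerSL ℝ ν ∘L L : EuclideanSpace ℝ ι →ₗ[ℝ] ℝ) = 0 :=
    (EuclideanSpace.basisFun ι ℝ).toBasis.ext fun i => by simpa using hν i
  exact LinearMap.congr_fun hzero u

end NormalVectors

/-- leading asymptote of the Green integral of a codimension-3 graphical
submanifold `Γ = h({|σ| < 1}) ⊂ ℝ⁵`:
`|I_{Γ,f}(s) + f(σ₀)/(4π|t|)| ≤ C` at `s = h(σ₀) + Σ tᵢnᵢ` with `0 < |t| ≤ c`. -/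
theorem statement17 : ∀ C₀ : ℝ, 1 ≤ C₀ → ∃ c C : ℝ, 0 < c ∧ 0 < C ∧
    ∀ f3 f4 f5 f : EuclideanSpace ℝ (Fin 2) → ℝ,
    ContDiffOn ℝ 2 f3 (Metric.closedBall 0 1) →
    ContDiffOn ℝ 2 f4 (Metric.closedBall 0 1) →
    ContDiffOn ℝ 2 f5 (Metric.closedBall 0 1) →
    ContDiffOn ℝ 2 f (Metric.closedBall 0 1) →
    (∀ σ ∈ Metric.closedBall (0 : EuclideanSpace ℝ (Fin 2)) 1, ∀ k : ℕ, k ≤ 2 →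
      ‖iteratedFDerivWithin ℝ k f3 (Metric.closedBall 0 1) σ‖ ≤ C₀ ∧
      ‖iteratedFDerivWithin ℝ k f4 (Metric.closedBall 0 1) σ‖ ≤ C₀ ∧
      ‖iteratedFDerivWithin ℝ k f5 (Metric.closedBall 0 1) σ‖ ≤ C₀ ∧
      ‖iteratedFDerivWithin ℝ k f (Metric.closedBall 0 1) σ‖ ≤ C₀) →
    ∀ σ₀ : EuclideanSpace ℝ (Fin 2), ‖σ₀‖ ≤ 1 / 2 →
    ∀ n1 n2 n3 : EuclideanSpace ℝ (Fin 5),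
    ‖n1‖ = 1 → ‖n2‖ = 1 → ‖n3‖ = 1 →
    ⟪n1, n2⟫ = 0 → ⟪n1, n3⟫ = 0 → ⟪n2, n3⟫ = 0 →
    (∀ i : Fin 2, ⟪n1, fderiv ℝ (graphMap f3 f4 f5) σ₀ (EuclideanSpace.single i 1)⟫ = 0) →
    (∀ i : Fin 2, ⟪n2, fderiv ℝ (graphMap f3 f4 f5) σ₀ (EuclideanSpace.single i 1)⟫ = 0) →
    (∀ i : Fin 2, ⟪n3, fderiv ℝ (graphMap f3 f4 f5) σ₀ (EuclideanSpace.single i 1)⟫ = 0) →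
    ∀ t1 t2 t3 : ℝ, 0 < t1 ^ 2 + t2 ^ 2 + t3 ^ 2 →
      Real.sqrt (t1 ^ 2 + t2 ^ 2 + t3 ^ 2) ≤ c →
    IntegrableOn (fun σ : EuclideanSpace ℝ (Fin 2) =>
        f σ * (‖(graphMap f3 f4 f5 σ₀ + t1 • n1 + t2 • n2 + t3 • n3)
          - graphMap f3 f4 f5 σ‖ ^ 3)⁻¹ * Real.sqrt (gramDet f3 f4 f5 σ))
      (Metric.ball 0 1) ∧
    |(-(1 / (8 * Real.pi ^ 2)) * ∫ σ in Metric.ball (0 : EuclideanSpace ℝ (Fin 2)) 1,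
        f σ * (‖(graphMap f3 f4 f5 σ₀ + t1 • n1 + t2 • n2 + t3 • n3)
          - graphMap f3 f4 f5 σ‖ ^ 3)⁻¹ * Real.sqrt (gramDet f3 f4 f5 σ))
      + f σ₀ / (4 * Real.pi * Real.sqrt (t1 ^ 2 + t2 ^ 2 + t3 ^ 2))| ≤ C := by
  intro C₀ hC₀
  have hK : 0 < 1 + 3 * C₀ := by linarith
  have hCK : C₀ ≤ 1 + 3 * C₀ := by linarith
  refine ⟨chartRadius (1 + 3 * C₀), greenErrorBound (1 + 3 * C₀), chartRadius_pos hK,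
    greenErrorBound_pos hK, ?_⟩
  intro f3 f4 f5 f h3 h4 h5 hf hbound σ₀ hσ₀ n1 n2 n3 hn1 hn2 hn3 h12 h13 h23 ho1 ho2 ho3
    t1 t2 t3 ht htc
  have hgeom : HasBoundedGeometryAt (1 + 3 * C₀) (graphMap f3 f4 f5) σ₀ :=
    hasBoundedGeometryAt_graphMap (by linarith)
      (.ball_of_contDiffOn h3 fun σ hσ k hk => (hbound σ hσ k hk).1)
      (.ball_of_contDiffOn h4 fun σ hσ k hk => (hbound σ hσ k hk).2.1)
      (.ball_of_contDiffOn h5 fun σ hσ k hk => (hbound σ hσ k hk).2.2.1) hσ₀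
  have hfC11 : IsC11On C₀ f (Metric.ball 0 1) :=
    .ball_of_contDiffOn hf fun σ hσ k hk => (hbound σ hσ k hk).2.2.2
  have hfK (σ) (hσ : σ ∈ Metric.ball 0 1) : |f σ| ≤ 1 + 3 * C₀ := by
    simpa using (hbound σ (Metric.ball_subset_closedBall hσ) 0 zero_le_two).2.2.2.trans hCK
  have hs : graphMap f3 f4 f5 σ₀ + t1 • n1 + t2 • n2 + t3 • n3 - graphMap f3 f4 f5 σ₀ =
      t1 • n1 + t2 • n2 + t3 • n3 := by abel
  have hT := norm_add_smul_of_orthonormal hn1 hn2 hn3 h12 h13 h23 t1 t2 t3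
  rw [← hT, ← hs] at htc ⊢
  refine statement17_general hgeom (hfC11.mono hCK) hfK (inner_clm_eq_zero_of_single fun i => ?_)
    (by rwa [hs, hT, Real.sqrt_pos]) htc
  simp [hs, inner_add_left, real_inner_smul_left, ho1 i, ho2 i, ho3 i]
end
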